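/- Let (ρ, u) be a weak solution of the stationary isentropic Navier–Stokes system on ℝ³ with exponent γ satisfying 3 ≤ γ < 6 and potential G ∈ D₀^{1, 6γ/(5γ−6)}(ℝ³). If ρ ∈ L^γ(ℝ³), then u = 0 almost everywhere. -/

import Mathlib

noncomputable section

open MeasureTheory Metric Filter Topology Set

/-- Three-dimensional Euclidean space. -/
abbrev E3 : Type := EuclideanSpace ℝ (Fin 3)

/-- Partial derivative of a scalar function in the `i`-th coordinate direction. -/
def pd (f : E3 → ℝ) (i : Fin 3) : E3 → ℝ :=
  fun x => fderiv ℝ f x (EuclideanSpace.single i 1)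

/-- Classical gradient matrix of a vector field: `(tgrad φ x) i j = ∂_j φ_i (x)`. -/
def tgrad (φ : E3 → Fin 3 → ℝ) (x : E3) : Fin 3 → Fin 3 → ℝ :=
  fun i j => pd (fun y => φ y i) j x

/-- Smooth compactly supported scalar test function with support in `Ω`. -/
def IsTest (Ω : Set E3) (φ : E3 → ℝ) : Prop :=
  ContDiff ℝ ((⊤ : ℕ∞) : WithTop ℕ∞) φ ∧ HasCompactSupport φ ∧ tsupport φ ⊆ Ω

/-- `C^n` compactly supported vector-valued test function with support in `Ω`. -/
def IsTestVec (n : WithTop ℕ∞) (Ω : Set E3) (φ : E3 → Fin 3 → ℝ) : Prop :=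
  ContDiff ℝ n φ ∧ HasCompactSupport φ ∧ tsupport φ ⊆ Ω

/-- The Newtonian viscous stress tensor
`S(M) = μ (M + Mᵗ - (2/3) (tr M) I) + η (tr M) I`. -/
def Smat (μ η : ℝ) (M : Fin 3 → Fin 3 → ℝ) : Fin 3 → Fin 3 → ℝ :=
  fun i j =>
    μ * (M i j + M j i - (2 / 3) * (∑ k, M k k) * (if i = j then (1 : ℝ) else 0))
      + η * (∑ k, M k k) * (if i = j then (1 : ℝ) else 0)

/-- `dG` is the weak gradient of the scalar function `G` on `Ω`. -/
def HasWeakGradOn (Ω : Set E3) (G : E3 → ℝ) (dG : E3 → Fin 3 → ℝ) : Prop :=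
  ∀ φ : E3 → ℝ, IsTest Ω φ → ∀ i : Fin 3,
    ∫ x in Ω, G x * pd φ i x = - ∫ x in Ω, dG x i * φ x

/-- `du` is the weak gradient (Jacobian) of the vector field `u` on `Ω`. -/
def HasWeakGradVecOn (Ω : Set E3) (u : E3 → Fin 3 → ℝ) (du : E3 → Fin 3 → Fin 3 → ℝ) : Prop :=
  ∀ φ : E3 → ℝ, IsTest Ω φ → ∀ i j : Fin 3,
    ∫ x in Ω, u x i * pd φ j x = - ∫ x in Ω, du x i j * φ x

/-- `u ∈ D₀^{1,2}(Ω; ℝ³)` with weak gradient `du`: `u` is locally integrable on `Ω`, its weak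
gradient belongs to `L²(Ω)`, and `u` can be approximated by smooth compactly supported fields
`uₙ` with `∇uₙ → ∇u` in `L²(Ω)` and `uₙ → u` in `L⁶(Ω)`. -/
def MemD012 (Ω : Set E3) (u : E3 → Fin 3 → ℝ) (du : E3 → Fin 3 → Fin 3 → ℝ) : Prop :=
  LocallyIntegrableOn u Ω volume ∧
  HasWeakGradVecOn Ω u du ∧
  MemLp du 2 (volume.restrict Ω) ∧
  ∃ un : ℕ → E3 → Fin 3 → ℝ,
    (∀ n, IsTestVec ((⊤ : ℕ∞) : WithTop ℕ∞) Ω (un n)) ∧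
    Tendsto (fun n => eLpNorm (fun x => tgrad (un n) x - du x) 2 (volume.restrict Ω))
      atTop (𝓝 0) ∧
    Tendsto (fun n => eLpNorm (fun x => un n x - u x) 6 (volume.restrict Ω)) atTop (𝓝 0)

/-- `G ∈ D₀^{1,q}(Ω)` with weak gradient `dG`. -/
def MemD01q (Ω : Set E3) (G : E3 → ℝ) (dG : E3 → Fin 3 → ℝ) (q : ℝ) : Prop :=
  HasWeakGradOn Ω G dG ∧
  MemLp dG (ENNReal.ofReal q) (volume.restrict Ω) ∧
  ∃ Gn : ℕ → E3 → ℝ,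
    (∀ n, IsTest Ω (Gn n)) ∧
    Tendsto (fun n =>
        eLpNorm (fun x => (fun i => pd (Gn n) i x) - dG x) (ENNReal.ofReal q)
          (volume.restrict Ω)) atTop (𝓝 0) ∧
    ∀ K : Set E3, IsCompact K → K ⊆ Ω →
      Tendsto (fun n => ∫ x in K, |Gn n x - G x|) atTop (𝓝 0)

/-- `G ∈ W^{1,∞}(Ω)` with weak gradient `dG`: both `G` and `∇G` are essentially bounded. -/
def MemW1inf (Ω : Set E3) (G : E3 → ℝ) (dG : E3 → Fin 3 → ℝ) : Prop :=
  HasWeakGradOn Ω G dG ∧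
  MemLp G ⊤ (volume.restrict Ω) ∧ MemLp dG ⊤ (volume.restrict Ω)

/-- Weak solution `(ρ, u)` (with weak gradient `du` of `u` and weak gradient `dG` of `G`) of the
stationary barotropic Navier–Stokes system
`div(ρu) = 0`, `div(ρ u⊗u) + ∇p(ρ) − div S(∇u) = ρ∇G` on `Ω` with no-slip boundary condition. -/
structure WeakSolution (Ω : Set E3) (μ η : ℝ) (p : ℝ → ℝ)
    (G : E3 → ℝ) (dG : E3 → Fin 3 → ℝ)
    (ρ : E3 → ℝ) (u : E3 → Fin 3 → ℝ) (du : E3 → Fin 3 → Fin 3 → ℝ) : Prop where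
  aemeas_ρ : AEMeasurable ρ volume
  aemeas_u : AEMeasurable u volume
  weakGrad_G : HasWeakGradOn Ω G dG
  ρ_nonneg : ∀ᵐ x ∂(volume.restrict Ω), 0 ≤ ρ x
  ρu_locInt : LocallyIntegrableOn (fun x => fun i => ρ x * u x i) (closure Ω) volume
  mass : ∀ φ : E3 → ℝ, ContDiff ℝ ((⊤ : ℕ∞) : WithTop ℕ∞) φ → HasCompactSupport φ →
    ∫ x in Ω, ρ x * (∑ i, u x i * pd φ i x) = 0
  ρ_locInt : LocallyIntegrableOn ρ Ω volume
  ρu2_locInt : LocallyIntegrableOn (fun x => ρ x * (∑ i, (u x i) ^ 2)) Ω volume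
  pρ_locInt : LocallyIntegrableOn (fun x => p (ρ x)) Ω volume
  ρdG_locInt : LocallyIntegrableOn (fun x => fun i => ρ x * dG x i) Ω volume
  u_D012 : MemD012 Ω u du
  momentum : ∀ φ : E3 → Fin 3 → ℝ, IsTestVec 1 Ω φ →
    ∫ x in Ω, ((∑ i, ∑ j, ρ x * u x i * u x j * tgrad φ x i j)
        + p (ρ x) * (∑ i, tgrad φ x i i))
      = (∫ x in Ω, ∑ i, ∑ j, Smat μ η (du x) i j * tgrad φ x i j)
        - ∫ x in Ω, ∑ i, ρ x * dG x i * φ x i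

/-- Weak solution of the stationary isentropic Navier–Stokes system on `ℝ³`
with pressure `p(ρ) = ρ^γ`. -/
def IsentropicWeakSolution (μ η γ : ℝ) (G : E3 → ℝ) (dG : E3 → Fin 3 → ℝ)
    (ρ : E3 → ℝ) (u : E3 → Fin 3 → ℝ) (du : E3 → Fin 3 → Fin 3 → ℝ) : Prop :=
  WeakSolution univ μ η (fun s => s ^ γ) G dG ρ u du

/-- The `L^r` norm of a scalar function on a set. -/
def lpNormOn (f : E3 → ℝ) (r : ℝ) (s : Set E3) : ℝ :=
  (∫ x in s, |f x| ^ r) ^ (1 / r)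

/-- Euclidean norm of a vector in `ℝ³` (represented as `Fin 3 → ℝ`). -/
def vnorm (v : Fin 3 → ℝ) : ℝ := Real.sqrt (∑ i, (v i) ^ 2)

/-- The `L^r` norm of a vector field on a set. -/
def vecLpNormOn (u : E3 → Fin 3 → ℝ) (r : ℝ) (s : Set E3) : ℝ :=
  (∫ x in s, (vnorm (u x)) ^ r) ^ (1 / r)

/-- The exponent `f(α, γ)` from the higher-integrability propositions. -/
def fExp (α γ : ℝ) : ℝ :=
  if 6 ≤ γ then
    (if (2 * γ - 3) / (γ * (γ - 1)) ≤ α then α - 3 / (2 * γ)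
     else α / γ + 1 / (2 * γ) - 3 / γ ^ 2)
  else
    (if 3 / (2 * (γ - 1)) ≤ α then α - 3 / (2 * γ)
     else if 1 / (2 * (γ - 1)) ≤ α then α / γ
     else α / γ ^ 2 + 1 / (2 * γ ^ 2))

/-- The exponent `g(α, β, γ)`. -/
def gExp (α β γ : ℝ) : ℝ :=
  if fExp α γ ≤ (γ - 3) / (γ * (3 * γ - 5)) then
    γ * (1 - fExp α γ) * (6 - β) / (3 * β * (γ - 1))
  else (1 - γ * fExp α γ) * (6 - β) / (2 * β)

section Part1
open scoped ENNReal NNReal ContDiff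

lemma pd_contDiff {f : E3 → ℝ} {m n : WithTop ℕ∞} (hf : ContDiff ℝ n f) (h : m + 1 ≤ n) (i : Fin 3) :
    ContDiff ℝ m (pd f i) := by
  unfold pd
  exact (hf.fderiv_right h).clm_apply contDiff_const

lemma pd_compact {f : E3 → ℝ} (hf : HasCompactSupport f) (i : Fin 3) :
    HasCompactSupport (pd f i) := by
  unfold pd
  exact HasCompactSupport.fderiv_apply (𝕜 := ℝ) hf _

lemma isTest_iff {f : E3 → ℝ} : IsTest univ f ↔ ContDiff ℝ ∞ f ∧ HasCompactSupport f := by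
  simp [IsTest]

lemma IsTest.pd {f : E3 → ℝ} (hf : IsTest univ f) (i : Fin 3) : IsTest univ (pd f i) := by
  rw [isTest_iff] at *
  exact ⟨pd_contDiff hf.1 (by norm_num) i, pd_compact hf.2 i⟩

lemma IsTest.memLp {f : E3 → ℝ} (hf : IsTest univ f) (p : ℝ≥0∞) : MemLp f p volume :=
  hf.1.continuous.memLp_of_hasCompactSupport hf.2.1

lemma IsTest.integrable {f : E3 → ℝ} (hf : IsTest univ f) : Integrable f volume :=
  hf.1.continuous.integrable_of_hasCompactSupport hf.2.1

/-- integration by parts, first factor `C¹` with compact support -/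
lemma ibp {f g : E3 → ℝ} (hf : ContDiff ℝ 1 f) (hc : HasCompactSupport f) (hg : ContDiff ℝ 1 g)
    (i : Fin 3) : ∫ x, f x * pd g i x = - ∫ x, pd f i x * g x := by
  have h0 : (0 : WithTop ℕ∞) + 1 ≤ 1 := by norm_num
  apply integral_mul_fderiv_eq_neg_fderiv_mul_of_integrable
  · exact Continuous.integrable_of_hasCompactSupport
      ((pd_contDiff hf h0 i).continuous.mul hg.continuous) ((pd_compact hc i).mul_right)
  · exact Continuous.integrable_of_hasCompactSupport
      (hf.continuous.mul (pd_contDiff hg h0 i).continuous) (hc.mul_right)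
  · exact Continuous.integrable_of_hasCompactSupport
      (hf.continuous.mul hg.continuous) (hc.mul_right)
  · intro x _; exact (hf.differentiable (by norm_num)).differentiableAt
  · intro x _; exact (hg.differentiable (by norm_num)).differentiableAt

lemma pd_mul {f g : E3 → ℝ} (hf : Differentiable ℝ f) (hg : Differentiable ℝ g) (i : Fin 3) (x : E3) :
    pd (fun y => f y * g y) i x = f x * pd g i x + pd f i x * g x := by
  unfold pd
  rw [fderiv_fun_mul hf.differentiableAt hg.differentiableAt]
  simp; ring

lemma pd_add {f g : E3 → ℝ} (hf : Differentiable ℝ f) (hg : Differentiable ℝ g) (i : Fin 3) (x : E3) :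
    pd (fun y => f y + g y) i x = pd f i x + pd g i x := by
  unfold pd
  rw [fderiv_fun_add hf.differentiableAt hg.differentiableAt]
  simp

lemma pd_const_mul {f : E3 → ℝ} (hf : Differentiable ℝ f) (c : ℝ) (i : Fin 3) (x : E3) :
    pd (fun y => c * f y) i x = c * pd f i x := by
  unfold pd
  rw [fderiv_const_mul hf.differentiableAt]
  simp

lemma pd_comm {f : E3 → ℝ} (hf : ContDiff ℝ 2 f) (i j : Fin 3) :
    pd (pd f i) j = pd (pd f j) i := by
  funext x
  have hd : DifferentiableAt ℝ (fderiv ℝ f) x :=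
    ((hf.fderiv_right (m := 1) (by norm_num)).differentiable (by norm_num)).differentiableAt
  have key : ∀ v w : E3, fderiv ℝ (fun y => fderiv ℝ f y v) x w = fderiv ℝ (fderiv ℝ f) x w v := by
    intro v w
    rw [fderiv_clm_apply hd (differentiableAt_const v)]
    simp
  have hs : IsSymmSndFDerivAt ℝ f x := hf.contDiffAt.isSymmSndFDerivAt (by simp)
  change fderiv ℝ (fun y => fderiv ℝ f y _) x _ = fderiv ℝ (fun y => fderiv ℝ f y _) x _
  rw [key, key]
  exact hs.eq _ _

lemma pd_translate (f : E3 → ℝ) (h : E3) (i : Fin 3) (x : E3) :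
    pd (fun y => f (y - h)) i x = pd f i (x - h) := by
  unfold pd
  rw [fderiv_comp_sub]

lemma IsTest.translate {f : E3 → ℝ} (hf : IsTest univ f) (h : E3) :
    IsTest univ (fun y => f (y - h)) := by
  rw [isTest_iff] at *
  exact ⟨hf.1.comp (contDiff_id.sub contDiff_const),
    hf.2.comp_homeomorph (Homeomorph.subRight h)⟩

lemma IsTest.add {f g : E3 → ℝ} (hf : IsTest univ f) (hg : IsTest univ g) :
    IsTest univ (fun y => f y + g y) := by
  rw [isTest_iff] at *
  exact ⟨hf.1.add hg.1, hf.2.add hg.2⟩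

lemma IsTest.const_mul {f : E3 → ℝ} (hf : IsTest univ f) (c : ℝ) :
    IsTest univ (fun y => c * f y) := by
  rw [isTest_iff] at *
  exact ⟨contDiff_const.mul hf.1, hf.2.mul_left⟩

lemma IsTest.differentiable {f : E3 → ℝ} (hf : IsTest univ f) : Differentiable ℝ f :=
  hf.1.differentiable (by norm_num)

lemma IsTest.one {f : E3 → ℝ} (hf : IsTest univ f) : ContDiff ℝ 1 f :=
  hf.1.of_le (by exact_mod_cast le_top)

lemma IsTest.two {f : E3 → ℝ} (hf : IsTest univ f) : ContDiff ℝ 2 f :=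
  hf.1.of_le (WithTop.coe_le_coe.2 le_top)

/-- Laplacian -/
def lap (f : E3 → ℝ) (x : E3) : ℝ := ∑ i, pd (pd f i) i x

lemma isTest_lap {f : E3 → ℝ} (hf : IsTest univ f) : IsTest univ (lap f) := by
  have : lap f = fun x => (pd (pd f 0) 0 x + pd (pd f 1) 1 x) + pd (pd f 2) 2 x := by
    funext x; simp [lap, Fin.sum_univ_three]
  rw [this]
  exact (((hf.pd _).pd _).add ((hf.pd _).pd _)).add ((hf.pd _).pd _)

lemma int_sq_pd2 {f : E3 → ℝ} (hf : IsTest univ f) (i j : Fin 3) :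
    ∫ x, (pd (pd f i) j x) ^ 2 = ∫ x, pd (pd f i) i x * pd (pd f j) j x := by
  have h1 := ibp ((hf.pd i).pd j).one ((hf.pd i).pd j).2.1 (hf.pd i).one j
  have h2 := ibp (((hf.pd j).pd j).one) ((hf.pd j).pd j).2.1 (hf.pd i).one i
  have e : pd (pd (pd f i) j) j = pd (pd (pd f j) j) i := by
    rw [pd_comm hf.two i j, pd_comm (hf.pd j).two i j]
  rw [e] at h1
  rw [show (∫ x, (pd (pd f i) j x) ^ 2) = ∫ x, pd (pd f i) j x * pd (pd f i) j x by
    congr; funext x; ring]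
  rw [h1, ← h2]
  congr; funext x; ring

lemma sum_int_sq_pd2 {f : E3 → ℝ} (hf : IsTest univ f) :
    ∑ i, ∑ j, ∫ x, (pd (pd f i) j x) ^ 2 = ∫ x, (lap f x) ^ 2 := by
  simp_rw [int_sq_pd2 hf]
  have hi : ∀ i j, Integrable (fun x => pd (pd f i) i x * pd (pd f j) j x) volume := by
    intro i j
    exact ((hf.pd i).pd i).memLp 2 |>.integrable_mul (((hf.pd j).pd j).memLp 2)
  simp_rw [← integral_finsetSum Finset.univ (fun j _ => hi _ j)]
  rw [← integral_finsetSum Finset.univ (fun i _ => integrable_finsetSum _ (fun j _ => hi i j))]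
  congr; funext x
  simp only [lap, Fin.sum_univ_three]; ring

/-- real valued Lp norm -/
def nrm (p : ℝ≥0∞) (f : E3 → ℝ) : ℝ := (eLpNorm f p volume).toReal

lemma nrm_nonneg (p : ℝ≥0∞) (f : E3 → ℝ) : 0 ≤ nrm p f := ENNReal.toReal_nonneg

lemma nrm_two_sq {f : E3 → ℝ} (hf : MemLp f 2 volume) : nrm 2 f ^ 2 = ∫ x, f x ^ 2 := by
  have := hf.eLpNorm_eq_integral_rpow_norm (by norm_num) (by norm_num)
  unfold nrm
  rw [this, ENNReal.toReal_ofReal (by positivity)]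
  simp only [ENNReal.toReal_ofNat, Real.rpow_ofNat, Real.norm_eq_abs, sq_abs]
  rw [← Real.rpow_natCast, ← Real.rpow_mul (integral_nonneg fun x => sq_nonneg _)]
  simp

lemma nrm_pd2_le {f : E3 → ℝ} (hf : IsTest univ f) (i j : Fin 3) :
    nrm 2 (pd (pd f i) j) ≤ nrm 2 (lap f) := by
  apply le_of_sq_le_sq _ (nrm_nonneg _ _) |> fun h => h
  rw [nrm_two_sq (((hf.pd i).pd j).memLp 2), nrm_two_sq ((isTest_lap hf).memLp 2), ← sum_int_sq_pd2 hf]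
  refine le_trans ?_ (Finset.single_le_sum (f := fun i => ∑ j, ∫ x, (pd (pd f i) j x) ^ 2)
    (fun k _ => Finset.sum_nonneg fun l _ => integral_nonneg fun x => sq_nonneg _) (Finset.mem_univ i))
  exact Finset.single_le_sum (f := fun j => ∫ x, (pd (pd f i) j x) ^ 2)
    (fun l _ => integral_nonneg fun x => sq_nonneg _) (Finset.mem_univ j)

/-- Hölder -/
lemma holder_abs {p q : ℝ≥0∞} [p.HolderConjugate q] {f g : E3 → ℝ} (hf : MemLp f p volume)
    (hg : MemLp g q volume) : |∫ x, f x * g x| ≤ nrm p f * nrm q g := by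
  have h : eLpNorm (fun x => f x * g x) 1 volume ≤ eLpNorm f p volume * eLpNorm g q volume := by
    have := eLpNorm_smul_le_mul_eLpNorm (p := p) (q := q) (r := 1) hg.1 hf.1
    exact this
  have hfin : eLpNorm f p volume * eLpNorm g q volume ≠ ⊤ := ENNReal.mul_ne_top hf.2.ne hg.2.ne
  have h3 := ENNReal.toReal_mono hfin h
  rw [ENNReal.toReal_mul] at h3
  refine le_trans ?_ h3
  have h5 : |∫ x, f x * g x| ≤ ∫ x, ‖f x * g x‖ := by
    rw [← Real.norm_eq_abs]; exact norm_integral_le_integral_norm _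
  refine h5.trans_eq ?_
  rw [eLpNorm_one_eq_lintegral_enorm]
  exact integral_norm_eq_lintegral_enorm (hf.1.mul hg.1)

lemma nrm_mul_le {p q r : ℝ≥0∞} [p.HolderTriple q r] {f g : E3 → ℝ} (hf : MemLp f p volume)
    (hg : MemLp g q volume) : nrm r (fun x => f x * g x) ≤ nrm p f * nrm q g := by
  have := eLpNorm_smul_le_mul_eLpNorm (p := p) (q := q) (r := r) hg.1 hf.1
  have hfin : eLpNorm f p volume * eLpNorm g q volume ≠ ⊤ := ENNReal.mul_ne_top hf.2.ne hg.2.ne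
  have h3 := ENNReal.toReal_mono hfin this
  rwa [ENNReal.toReal_mul] at h3

lemma nrm_add_le {p : ℝ≥0∞} (hp : 1 ≤ p) {f g : E3 → ℝ} (hf : MemLp f p volume)
    (hg : MemLp g p volume) : nrm p (fun x => f x + g x) ≤ nrm p f + nrm p g := by
  unfold nrm
  rw [← ENNReal.toReal_add hf.2.ne hg.2.ne]
  exact ENNReal.toReal_mono (ENNReal.add_ne_top.2 ⟨hf.2.ne, hg.2.ne⟩) (eLpNorm_add_le hf.1 hg.1 hp)

lemma nrm_sub_le {p : ℝ≥0∞} (hp : 1 ≤ p) {f g : E3 → ℝ} (hf : MemLp f p volume)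
    (hg : MemLp g p volume) : nrm p (fun x => f x - g x) ≤ nrm p f + nrm p g := by
  unfold nrm
  rw [← ENNReal.toReal_add hf.2.ne hg.2.ne]
  exact ENNReal.toReal_mono (ENNReal.add_ne_top.2 ⟨hf.2.ne, hg.2.ne⟩) (eLpNorm_sub_le hf.1 hg.1 hp)

/-- `fn → f` in `L^p` -/
def LpT (p : ℝ≥0∞) (fn : ℕ → E3 → ℝ) (f : E3 → ℝ) : Prop :=
  (∀ n, MemLp (fn n) p volume) ∧ MemLp f p volume ∧
    Tendsto (fun n => eLpNorm (fun x => fn n x - f x) p volume) atTop (𝓝 0)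

lemma LpT.const {p : ℝ≥0∞} {f : E3 → ℝ} (hf : MemLp f p volume) : LpT p (fun _ => f) f := by
  refine ⟨fun _ => hf, hf, ?_⟩
  simp

lemma LpT.bdd {p : ℝ≥0∞} [Fact (1 ≤ p)] {fn : ℕ → E3 → ℝ} {f : E3 → ℝ} (h : LpT p fn f) :
    Tendsto (fun n => nrm p (fn n)) atTop (𝓝 (nrm p f)) := by
  have h1 : Tendsto (fun n => nrm p (fun x => fn n x - f x)) atTop (𝓝 0) := by
    have := (ENNReal.tendsto_toReal (ENNReal.zero_ne_top)).comp h.2.2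
    simpa [nrm, Function.comp_def] using this
  have hp : (1 : ℝ≥0∞) ≤ p := Fact.out
  rw [tendsto_iff_norm_sub_tendsto_zero]
  refine squeeze_zero (fun _ => norm_nonneg _) (fun n => ?_) h1
  rw [Real.norm_eq_abs, abs_le]
  have a1 := nrm_add_le hp ((h.1 n).sub h.2.1) h.2.1
  have a2 := nrm_sub_le hp (h.1 n) ((h.1 n).sub h.2.1)
  simp only [Pi.sub_apply, sub_add_cancel, sub_sub_cancel] at a1 a2
  change nrm p (fn n) ≤ nrm p (fun x => fn n x - f x) + nrm p f at a1
  change nrm p f ≤ nrm p (fn n) + nrm p (fun x => fn n x - f x) at a2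
  constructor <;> linarith

lemma LpT.add {p : ℝ≥0∞} [Fact (1 ≤ p)] {fn gn : ℕ → E3 → ℝ} {f g : E3 → ℝ} (h : LpT p fn f)
    (h' : LpT p gn g) : LpT p (fun n x => fn n x + gn n x) (fun x => f x + g x) := by
  refine ⟨fun n => (h.1 n).add (h'.1 n), h.2.1.add h'.2.1, ?_⟩
  have h2 := h.2.2.add h'.2.2
  rw [add_zero] at h2
  refine tendsto_of_tendsto_of_tendsto_of_le_of_le tendsto_const_nhds h2 (fun _ => bot_le) ?_
  intro n
  have e : (fun x => fn n x + gn n x - (f x + g x)) = (fn n - f) + (gn n - g) := by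
    funext x; simp only [Pi.add_apply, Pi.sub_apply]; ring
  have := eLpNorm_add_le ((h.1 n).sub h.2.1).1 ((h'.1 n).sub h'.2.1).1 (Fact.out : 1 ≤ p)
  rw [← e] at this
  exact this

lemma LpT.const_mul {p : ℝ≥0∞} {fn : ℕ → E3 → ℝ} {f : E3 → ℝ} (h : LpT p fn f) (c : ℝ) :
    LpT p (fun n x => c * fn n x) (fun x => c * f x) := by
  refine ⟨fun n => (h.1 n).const_mul c, h.2.1.const_mul c, ?_⟩
  have h2 := ENNReal.Tendsto.const_mul (a := ‖c‖ₑ) h.2.2 (Or.inr (by simp))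
  rw [mul_zero] at h2
  refine h2.congr fun n => ?_
  rw [← eLpNorm_const_smul]
  congr 1; funext x; simp; ring

lemma LpT.mul {p q r : ℝ≥0∞} [p.HolderTriple q r] [Fact (1 ≤ r)] [Fact (1 ≤ p)]
    {fn gn : ℕ → E3 → ℝ} {f g : E3 → ℝ}
    (h : LpT p fn f) (h' : LpT q gn g) : LpT r (fun n x => fn n x * gn n x) (fun x => f x * g x) := by
  have m : ∀ {a b : E3 → ℝ}, MemLp a p volume → MemLp b q volume → MemLp (fun x => a x * b x) r volume :=
    fun ha hb => hb.mul (f := _) ha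
  refine ⟨fun n => m (h.1 n) (h'.1 n), m h.2.1 h'.2.1, ?_⟩
  have hb := h.bdd
  have key : ∀ n, eLpNorm (fun x => fn n x * gn n x - f x * g x) r volume ≤
      eLpNorm (fn n) p volume * eLpNorm (fun x => gn n x - g x) q volume +
      eLpNorm (fun x => fn n x - f x) p volume * eLpNorm g q volume := by
    intro n
    have e1 := eLpNorm_smul_le_mul_eLpNorm (p := p) (q := q) (r := r) ((h'.1 n).sub h'.2.1).1 (h.1 n).1
    have e2 := eLpNorm_smul_le_mul_eLpNorm (p := p) (q := q) (r := r) h'.2.1.1 ((h.1 n).sub h.2.1).1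
    have e3 := eLpNorm_add_le (m (h.1 n) ((h'.1 n).sub h'.2.1)).1 (m ((h.1 n).sub h.2.1) h'.2.1).1 (Fact.out : 1 ≤ r)
    refine le_trans (le_of_eq ?_) (e3.trans (add_le_add e1 e2))
    congr 1; funext x; simp; ring
  have t1 : Tendsto (fun n => eLpNorm (fn n) p volume * eLpNorm (fun x => gn n x - g x) q volume) atTop (𝓝 0) := by
    have hb' : Tendsto (fun n => eLpNorm (fn n) p volume) atTop (𝓝 (eLpNorm f p volume)) := by
      have := (ENNReal.continuous_ofReal.tendsto _).comp hb
      simp only [nrm, Function.comp_def] at this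
      rw [ENNReal.ofReal_toReal h.2.1.2.ne] at this
      refine this.congr fun n => ENNReal.ofReal_toReal (h.1 n).2.ne
    have := ENNReal.Tendsto.mul hb' (Or.inr ENNReal.zero_ne_top) h'.2.2 (Or.inr h.2.1.2.ne)
    simpa using this
  have t2 : Tendsto (fun n => eLpNorm (fun x => fn n x - f x) p volume * eLpNorm g q volume) atTop (𝓝 0) := by
    have := ENNReal.Tendsto.mul_const (b := eLpNorm g q volume) h.2.2 (Or.inr h'.2.1.2.ne)
    simpa using this
  have t3 := t1.add t2
  rw [add_zero] at t3
  exact tendsto_of_tendsto_of_tendsto_of_le_of_le tendsto_const_nhds t3 (fun _ => bot_le) key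

lemma LpT.integral {fn : ℕ → E3 → ℝ} {f : E3 → ℝ} (h : LpT 1 fn f) :
    Tendsto (fun n => ∫ x, fn n x) atTop (𝓝 (∫ x, f x)) := by
  refine tendsto_integral_of_L1' f h.2.1.1
    (Eventually.of_forall fun n => memLp_one_iff_integrable.1 (h.1 n)) ?_
  exact h.2.2

end Part1

section Part2
open scoped ENNReal NNReal ContDiff

lemma nrm_sum3_le {f : Fin 3 → E3 → ℝ} (hf : ∀ i, MemLp (f i) 2 volume) :
    nrm 2 (fun x => ∑ i, f i x) ≤ ∑ i, nrm 2 (f i) := by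
  simp only [Fin.sum_univ_three]
  have h1 := nrm_add_le (p := 2) (by norm_num) (hf 0) (hf 1)
  have h2 := nrm_add_le (p := 2) (by norm_num) ((hf 0).add (hf 1)) (hf 2)
  simp only [Pi.add_apply] at h2
  change _ ≤ nrm 2 (fun x => f 0 x + f 1 x) + _ at h2
  linarith

lemma fderiv_norm_le (f : E3 → ℝ) (x : E3) : ‖fderiv ℝ f x‖ ≤ ∑ i, |pd f i x| := by
  refine ContinuousLinearMap.opNorm_le_bound _ (by positivity) fun v => ?_
  have hv : v = ∑ i, v i • EuclideanSpace.single i (1 : ℝ) := by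
    ext j; fin_cases j <;> simp [Fin.sum_univ_three]
  conv_lhs => rw [hv, map_sum]
  refine (norm_sum_le _ _).trans ?_
  rw [Finset.sum_mul]
  refine Finset.sum_le_sum fun i _ => ?_
  rw [map_smul, norm_smul, mul_comm]
  exact mul_le_mul_of_nonneg_left (PiLp.norm_apply_le v i) (norm_nonneg _)

lemma sobolev : ∃ C : ℝ, 0 ≤ C ∧ ∀ f : E3 → ℝ, IsTest univ f →
    nrm 6 f ≤ C * ∑ i, nrm 2 (pd f i) := by
  refine ⟨(SNormLESNormFDerivOfEqConst ℝ (volume : Measure E3) 2 : ℝ≥0), by positivity, ?_⟩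
  intro f hf
  have h := eLpNorm_le_eLpNorm_fderiv_of_eq (μ := (volume : Measure E3)) (F := ℝ) hf.one hf.2.1
    (p := 2) (p' := 6) (by norm_num) (by simp) (by simp; norm_num)
  have hm : ∀ i, MemLp (fun x => |pd f i x|) 2 volume := fun i => ((hf.pd i).memLp 2).abs
  have hm' : MemLp (fun x => ∑ i, |pd f i x|) 2 volume := memLp_finsetSum _ fun i _ => hm i
  have h2 : eLpNorm (fderiv ℝ f) 2 volume ≤ eLpNorm (fun x => ∑ i, |pd f i x|) 2 volume := by
    refine eLpNorm_mono fun x => (fderiv_norm_le f x).trans (le_abs_self _)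
  have h3 := h.trans (mul_le_mul_right h2 _)
  have h4 := ENNReal.toReal_mono (ENNReal.mul_ne_top (by simp) hm'.2.ne) h3
  rw [ENNReal.toReal_mul] at h4
  refine h4.trans ?_
  refine mul_le_mul_of_nonneg_left ?_ (by simp)
  refine (nrm_sum3_le hm).trans (le_of_eq ?_)
  refine Finset.sum_congr rfl fun i _ => ?_
  unfold nrm
  exact congrArg _ (eLpNorm_norm (pd f i))

/-- mollification -/
def cvk (k f : E3 → ℝ) (x : E3) : ℝ := ∫ y, k (x - y) * f y

lemma cvk_eq (k f : E3 → ℝ) : cvk k f = convolution k f (ContinuousLinearMap.lsmul ℝ ℝ) volume := by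
  funext x
  rw [convolution_eq_swap]
  rfl

lemma cvk_contDiff {k f : E3 → ℝ} (hk : IsTest univ k) (hf : LocallyIntegrable f volume) :
    ContDiff ℝ ∞ (cvk k f) := by
  rw [cvk_eq]
  exact hk.2.1.contDiff_convolution_left _ hk.1 hf

lemma cvk_pd {k f : E3 → ℝ} (hk : IsTest univ k) (hf : LocallyIntegrable f volume) (i : Fin 3) :
    pd (cvk k f) i = cvk (pd k i) f := by
  funext x
  have h := hk.2.1.hasFDerivAt_convolution_left (ContinuousLinearMap.lsmul ℝ ℝ) hk.one hf x
  unfold pd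
  rw [cvk_eq, h.fderiv, convolution_eq_swap]
  have hIntb : Integrable (fun t => ((ContinuousLinearMap.lsmul ℝ ℝ).precompL E3) (fderiv ℝ k (x - t)) (f t)) volume := by
    have := (hk.2.1.fderiv ℝ).convolutionExists_left ((ContinuousLinearMap.lsmul ℝ ℝ).precompL E3)
      (hk.one.continuous_fderiv (by norm_num)) hf x
    exact this.integrable_swap
  rw [ContinuousLinearMap.integral_apply hIntb]
  rfl

lemma cvk_integrable {k f : E3 → ℝ} (hk : IsTest univ k) (hf : Integrable f volume) :
    Integrable (cvk k f) volume := by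
  rw [cvk_eq]
  exact hk.integrable.integrable_convolution _ hf

lemma IsTest.bdd {k : E3 → ℝ} (hk : IsTest univ k) : ∃ C, 0 ≤ C ∧ ∀ x, |k x| ≤ C := by
  obtain ⟨C, hC⟩ := hk.1.continuous.bounded_above_of_compact_support hk.2.1
  exact ⟨C, (norm_nonneg _).trans (hC 0), hC⟩

lemma cvk_int_aux {k f : E3 → ℝ} (hk : IsTest univ k) (hf : LocallyIntegrable f volume) (x : E3) :
    Integrable (fun y => k (x - y) * f y) volume := by
  have := hk.2.1.convolutionExists_left (ContinuousLinearMap.lsmul ℝ ℝ) hk.1.continuous hf x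
  exact this.integrable_swap

lemma cvk_bdd {k f : E3 → ℝ} (hk : IsTest univ k) (hf : Integrable f volume) :
    ∃ C, 0 ≤ C ∧ ∀ x, |cvk k f x| ≤ C := by
  obtain ⟨C, hC0, hC⟩ := hk.bdd
  refine ⟨C * ∫ y, |f y|, mul_nonneg hC0 (integral_nonneg fun _ => abs_nonneg _), fun x => ?_⟩
  unfold cvk
  rw [← integral_const_mul, ← Real.norm_eq_abs]
  refine (norm_integral_le_integral_norm _).trans ?_
  refine integral_mono_of_nonneg (Eventually.of_forall fun _ => norm_nonneg _) (hf.abs.const_mul C)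
    (Eventually.of_forall fun y => ?_)
  simp only [norm_mul, Real.norm_eq_abs]
  exact mul_le_mul_of_nonneg_right (hC _) (abs_nonneg _)

lemma cvk_memLp_two_of_L1 {k f : E3 → ℝ} (hk : IsTest univ k) (hf : Integrable f volume) :
    MemLp (cvk k f) 2 volume := by
  obtain ⟨C, hC0, hC⟩ := cvk_bdd hk hf
  have hc := (cvk_contDiff hk hf.locallyIntegrable).continuous
  rw [memLp_two_iff_integrable_sq hc.aestronglyMeasurable]
  refine ((cvk_integrable hk hf).abs.const_mul C).mono' (hc.pow 2).aestronglyMeasurable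
    (Eventually.of_forall fun x => ?_)
  rw [Real.norm_eq_abs, abs_pow, pow_two]
  exact mul_le_mul_of_nonneg_right (hC x) (abs_nonneg _)

lemma cvk_memLp_two {k g : E3 → ℝ} (hk : IsTest univ k) (hk0 : ∀ x, 0 ≤ k x) (hk1 : ∫ x, k x = 1)
    (hg : MemLp g 2 volume) : MemLp (cvk k g) 2 volume := by
  have hgl : LocallyIntegrable g volume := hg.locallyIntegrable (by norm_num)
  have hg2 : Integrable (fun x => g x ^ 2) volume := hg.integrable_sq
  have hc := (cvk_contDiff hk hgl).continuous
  rw [memLp_two_iff_integrable_sq hc.aestronglyMeasurable]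
  refine (cvk_integrable hk hg2).mono' (hc.pow 2).aestronglyMeasurable
    (Eventually.of_forall fun x => ?_)
  rw [Real.norm_eq_abs, abs_of_nonneg (sq_nonneg _)]
  set c := cvk k g x with hcdef
  have h1 : Integrable (fun y => k (x - y)) volume := hk.integrable.comp_sub_left x
  have h1' : ∫ y, k (x - y) = 1 := by rw [integral_sub_left_eq_self]; exact hk1
  have h2 := cvk_int_aux hk hgl x
  have h3 := cvk_int_aux hk hg2.locallyIntegrable x
  have h4 : 0 ≤ ∫ y, (k (x - y) * g y ^ 2 - 2 * c * (k (x - y) * g y) + c ^ 2 * k (x - y)) := by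
    refine integral_nonneg fun y => ?_
    have : k (x - y) * g y ^ 2 - 2 * c * (k (x - y) * g y) + c ^ 2 * k (x - y) = k (x - y) * (g y - c) ^ 2 := by ring
    simp only [Pi.zero_apply]
    rw [this]
    exact mul_nonneg (hk0 _) (sq_nonneg _)
  have hs : Integrable (fun y => k (x - y) * g y ^ 2 - 2 * c * (k (x - y) * g y)) volume :=
    h3.sub (h2.const_mul _)
  rw [integral_add hs (h1.const_mul _), integral_sub h3 (h2.const_mul _),
    integral_const_mul, integral_const_mul, h1'] at h4
  change 0 ≤ cvk k (fun x => g x ^ 2) x - 2 * c * cvk k g x + c ^ 2 * 1 at h4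
  rw [← hcdef] at h4
  nlinarith

/-- bump functions -/
def bmp (n : ℕ) : ContDiffBump (0 : E3) where
  rIn := 1 / ((n : ℝ) + 1)
  rOut := 2 / ((n : ℝ) + 1)
  rIn_pos := by positivity
  rIn_lt_rOut := by
    have : (0:ℝ) < (n : ℝ) + 1 := by positivity
    gcongr; norm_num

def kern (n : ℕ) : E3 → ℝ := (bmp n).normed volume

lemma kern_test (n : ℕ) : IsTest univ (kern n) := by
  rw [isTest_iff]
  exact ⟨(bmp n).contDiff_normed, (bmp n).hasCompactSupport_normed⟩

lemma kern_nonneg (n : ℕ) (x : E3) : 0 ≤ kern n x := (bmp n).nonneg_normed x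

lemma kern_int (n : ℕ) : ∫ x, kern n x = 1 := (bmp n).integral_normed

lemma kern_even (n : ℕ) (x : E3) : kern n (-x) = kern n x := (bmp n).normed_neg x

lemma kern_supp (n : ℕ) : tsupport (kern n) = closedBall 0 (2 / ((n : ℝ) + 1)) :=
  (bmp n).tsupport_normed_eq

lemma rOut_tendsto : Tendsto (fun n : ℕ => 2 / ((n : ℝ) + 1)) atTop (𝓝 0) := by
  have := (tendsto_one_div_add_atTop_nhds_zero_nat (𝕜 := ℝ)).const_mul 2
  simpa [div_eq_mul_inv] using this

lemma kern_ae {f : E3 → ℝ} (hf : LocallyIntegrable f volume) :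
    ∀ᵐ x, Tendsto (fun n => cvk (kern n) f x) atTop (𝓝 (f x)) := by
  have := ContDiffBump.ae_convolution_tendsto_right_of_locallyIntegrable (φ := bmp) (l := atTop)
    (K := 2) (μ := (volume : Measure E3)) (g := f) rOut_tendsto
    (Eventually.of_forall fun n => by simp only [bmp]; apply le_of_eq; ring) hf
  filter_upwards [this] with x hx
  simp_rw [cvk_eq]
  exact hx

lemma bmp_scale (n : ℕ) (x : E3) : bmp n x = bmp 0 (((n : ℝ) + 1) • x) := by
  rw [ContDiffBump.apply, ContDiffBump.apply]
  have : (0:ℝ) < (n : ℝ) + 1 := by positivity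
  have e1 : (bmp n).rOut / (bmp n).rIn = 2 := by simp only [bmp]; field_simp
  have e2 : (bmp 0).rOut / (bmp 0).rIn = 2 := by simp [bmp]
  have e3 : (bmp n).rIn⁻¹ • (x - 0) = (bmp 0).rIn⁻¹ • (((n : ℝ) + 1) • x - 0) := by simp [bmp]
  rw [e1, e2, e3]

lemma kern_grad : ∃ C : ℝ, 0 ≤ C ∧ ∀ n i, ∫ h, ‖h‖ * |pd (kern n) i h| ≤ C := by
  have hb : IsTest univ (bmp 0) := by
    rw [isTest_iff]; exact ⟨(bmp 0).contDiff, (bmp 0).hasCompactSupport⟩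
  choose C hC0 hC using fun i => (hb.pd i).bdd
  set V : ℝ := volume.real (ball (0 : E3) 1) with hV
  have hVpos : 0 < V := by
    rw [hV]; exact ENNReal.toReal_pos (measure_ball_pos _ _ one_pos).ne' measure_ball_lt_top.ne
  refine ⟨16 * ∑ i, C i, mul_nonneg (by norm_num) (Finset.sum_nonneg fun i _ => hC0 i), fun n i => ?_⟩
  have hN : (0:ℝ) < (n : ℝ) + 1 := by positivity
  set N : ℝ := (n : ℝ) + 1 with hNdef
  have hvol : ∀ r : ℝ, 0 ≤ r → volume.real (closedBall (0 : E3) r) = r ^ 3 * V := by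
    intro r hr
    rw [Measure.real, Measure.addHaar_closedBall _ _ hr]
    simp [ENNReal.toReal_mul, hr, hV, Measure.real]
  have hI : (1 / N) ^ 3 * V ≤ ∫ x, bmp n x := by
    have := (bmp n).measure_closedBall_le_integral volume
    rwa [show (bmp n).rIn = 1 / N from rfl, hvol _ (by positivity)] at this
  set I := ∫ x, bmp n x with hIdef
  have hIpos : 0 < I := lt_of_lt_of_le (by positivity) hI
  have hpd : ∀ x, pd (kern n) i x = N / I * pd (bmp 0) i (N • x) := by
    intro x
    have e : kern n = fun x => I⁻¹ * bmp 0 (N • x) := by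
      funext y
      simp only [kern, ContDiffBump.normed_def]
      rw [bmp_scale, ← hIdef]; ring
    have hd : Differentiable ℝ (fun x => bmp 0 (N • x)) :=
      hb.differentiable.comp (differentiable_id.const_smul N)
    rw [e, pd_const_mul hd]
    unfold pd
    rw [fderiv_comp_smul]
    simp
    ring
  have hbound : ∀ x, ‖x‖ * |pd (kern n) i x| ≤ (closedBall (0:E3) (2 / N)).indicator (fun _ => 2 / I * C i) x := by
    intro x
    by_cases hx : x ∈ closedBall (0 : E3) (2 / N)
    · rw [indicator_of_mem hx, hpd, abs_mul, abs_of_nonneg (by positivity)]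
      have hx' : ‖x‖ ≤ 2 / N := by simpa using hx
      calc ‖x‖ * (N / I * |pd (bmp 0) i (N • x)|) ≤ (2 / N) * (N / I * C i) := by
            gcongr; exact hC i _
        _ = 2 / I * C i := by field_simp
    · rw [indicator_of_notMem hx]
      have : pd (kern n) i x = 0 := by
        have h2 : x ∉ tsupport (kern n) := by rw [kern_supp]; exact hx
        unfold pd
        rw [fderiv_of_notMem_tsupport (𝕜 := ℝ) h2]; simp
      rw [this]; simp
  have hIntb : Integrable ((closedBall (0:E3) (2 / N)).indicator (fun _ => 2 / I * C i)) volume := by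
    rw [integrable_indicator_iff measurableSet_closedBall]
    exact integrableOn_const measure_closedBall_lt_top.ne
  refine (integral_mono_of_nonneg (Eventually.of_forall fun x => by positivity) hIntb
    (Eventually.of_forall hbound)).trans ?_
  rw [integral_indicator measurableSet_closedBall, setIntegral_const, hvol _ (by positivity), smul_eq_mul]
  have h8 : (2 / N) ^ 3 * V ≤ 8 * I := by
    have : (2 / N) ^ 3 * V = 8 * ((1 / N) ^ 3 * V) := by ring
    linarith
  calc (2 / N) ^ 3 * V * (2 / I * C i) ≤ 8 * I * (2 / I * C i) := by
        gcongr; exact mul_nonneg (by positivity) (hC0 i)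
    _ = 16 * C i := by field_simp; ring
    _ ≤ 16 * ∑ i, C i := by
        gcongr; exact Finset.single_le_sum (f := C) (fun j _ => hC0 j) (Finset.mem_univ i)

end Part2

section Part3
open scoped ENNReal NNReal ContDiff

lemma pd_scale (f : E3 → ℝ) (c : ℝ) (i : Fin 3) (x : E3) :
    pd (fun y => f (c • y)) i x = c * pd f i (c • x) := by
  unfold pd
  rw [fderiv_comp_smul]
  simp

lemma pd_reflect (f : E3 → ℝ) (a : E3) (i : Fin 3) (x : E3) :
    pd (fun y => f (a - y)) i x = - pd f i (a - x) := by
  have e : (fun y => f (a - y)) = fun y => (fun z => f ((-1 : ℝ) • z)) (y - a) := by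
    funext y; simp
  rw [e, pd_translate (fun z => f ((-1 : ℝ) • z)), pd_scale]
  simp

lemma IsTest.reflect {f : E3 → ℝ} (hf : IsTest univ f) (a : E3) :
    IsTest univ (fun y => f (a - y)) := by
  rw [isTest_iff] at *
  exact ⟨hf.1.comp (contDiff_const.sub contDiff_id),
    hf.2.comp_homeomorph (Homeomorph.subLeft a)⟩

lemma bmp_test (n : ℕ) : IsTest univ (bmp n) := by
  rw [isTest_iff]; exact ⟨(bmp n).contDiff, (bmp n).hasCompactSupport⟩

/-- cutoff functions -/
def zt (n : ℕ) (x : E3) : ℝ := bmp 0 ((1 / ((n : ℝ) + 1)) • x)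

lemma zt_test (n : ℕ) : IsTest univ (zt n) := by
  have h := bmp_test 0
  rw [isTest_iff] at *
  have hc : (1 / ((n : ℝ) + 1)) ≠ 0 := by positivity
  exact ⟨h.1.comp (contDiff_const_smul _), h.2.comp_homeomorph (Homeomorph.smulOfNeZero _ hc)⟩

lemma zt_nonneg (n : ℕ) (x : E3) : 0 ≤ zt n x := (bmp 0).nonneg
lemma zt_le_one (n : ℕ) (x : E3) : zt n x ≤ 1 := (bmp 0).le_one

lemma zt_one {n : ℕ} {x : E3} (hx : ‖x‖ ≤ (n : ℝ) + 1) : zt n x = 1 := by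
  unfold zt
  apply (bmp 0).one_of_mem_closedBall
  rw [mem_closedBall_zero_iff, norm_smul]
  have : (0:ℝ) < (n : ℝ) + 1 := by positivity
  rw [Real.norm_of_nonneg (by positivity)]
  simp only [bmp]
  rw [one_div_mul_eq_div, div_le_iff₀ this]
  simpa using hx

lemma zt_zero {n : ℕ} {x : E3} (hx : 2 * ((n : ℝ) + 1) ≤ ‖x‖) : zt n x = 0 := by
  unfold zt
  apply (bmp 0).zero_of_le_dist
  have : (0:ℝ) < (n : ℝ) + 1 := by positivity
  rw [dist_zero_right, norm_smul, Real.norm_of_nonneg (by positivity)]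
  simp only [bmp]
  rw [one_div_mul_eq_div, le_div_iff₀ this]
  simpa using hx

lemma zt_pd (n : ℕ) (i : Fin 3) :
    pd (zt n) i = fun x => (1 / ((n : ℝ) + 1)) * pd (bmp 0) i ((1 / ((n : ℝ) + 1)) • x) := by
  funext x
  exact pd_scale _ _ _ _

lemma zt_pd_bdd : ∃ C : ℝ, 0 ≤ C ∧ ∀ n i x, |pd (zt n) i x| ≤ C / ((n : ℝ) + 1) := by
  choose C hC0 hC using fun i => ((bmp_test 0).pd i).bdd
  refine ⟨∑ i, C i, Finset.sum_nonneg fun i _ => hC0 i, fun n i x => ?_⟩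
  rw [zt_pd, abs_mul, abs_of_nonneg (by positivity), one_div_mul_eq_div]
  gcongr
  exact (hC i _).trans (Finset.single_le_sum (f := C) (fun j _ => hC0 j) (Finset.mem_univ i))

lemma zt_lap_bdd : ∃ C : ℝ, 0 ≤ C ∧ ∀ n x, |lap (zt n) x| ≤ C / ((n : ℝ) + 1) := by
  choose C hC0 hC using fun i => (((bmp_test 0).pd i).pd i).bdd
  refine ⟨∑ i, C i, Finset.sum_nonneg fun i _ => hC0 i, fun n x => ?_⟩
  unfold lap
  rw [Finset.sum_div]
  refine (Finset.abs_sum_le_sum_abs _ _).trans (Finset.sum_le_sum fun i _ => ?_)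
  have hd : Differentiable ℝ (fun x => pd (bmp 0) i ((1 / ((n : ℝ) + 1)) • x)) :=
    ((bmp_test 0).pd i).differentiable.comp (differentiable_id.const_smul (1 / ((n : ℝ) + 1)))
  rw [zt_pd, pd_const_mul hd, pd_scale, abs_mul, abs_of_nonneg (by positivity), one_div_mul_eq_div]
  have h1 : 1 / ((n : ℝ) + 1) ≤ 1 := by
    rw [div_le_one (by positivity)]; linarith [Nat.cast_nonneg (α := ℝ) n]
  gcongr
  rw [abs_mul, abs_of_nonneg (by positivity)]
  calc _ ≤ 1 * C i := by gcongr; exact hC i _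
    _ = C i := one_mul _

lemma zt_tendsto (x : E3) : ∀ᶠ n in atTop, zt n x = 1 := by
  obtain ⟨N, hN⟩ := exists_nat_ge ‖x‖
  filter_upwards [eventually_ge_atTop N] with n hn
  apply zt_one
  have : (N : ℝ) ≤ n := by exact_mod_cast hn
  linarith

lemma div_nat_tendsto (C : ℝ) : Tendsto (fun n : ℕ => C / ((n : ℝ) + 1)) atTop (𝓝 0) := by
  have := (tendsto_one_div_add_atTop_nhds_zero_nat (𝕜 := ℝ)).const_mul C
  simpa [div_eq_mul_inv] using this

lemma const_of_pd_zero {v : E3 → ℝ} (hv : Differentiable ℝ v) (h : ∀ i x, pd v i x = 0) (x y : E3) :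
    v x = v y := by
  refine is_const_of_fderiv_eq_zero (𝕜 := ℝ) hv (fun z => ?_) x y
  have := fderiv_norm_le v z
  simp only [h, abs_zero, Finset.sum_const_zero] at this
  exact norm_le_zero_iff.1 this

lemma harm_zero {v : E3 → ℝ} (hv : ContDiff ℝ ∞ v) (hL : MemLp v 2 volume)
    (hh : ∀ x, lap v x = 0) (x : E3) : v x = 0 := by
  have hv2 : ContDiff ℝ 2 v := hv.of_le (WithTop.coe_le_coe.2 le_top)
  have hd : Differentiable ℝ v := hv2.differentiable (by norm_num)
  have hpc : ∀ i, ContDiff ℝ 1 (pd v i) := fun i => pd_contDiff hv2 (by norm_num) i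
  have hpd : ∀ i, Differentiable ℝ (pd v i) := fun i => (hpc i).differentiable (by norm_num)
  set w : E3 → ℝ := fun y => v y * v y with hw
  have hwc : ContDiff ℝ 2 w := hv2.mul hv2
  have hpw : ∀ i, pd w i = fun y => 2 * (v y * pd v i y) := by
    intro i; funext y; rw [hw, pd_mul hd hd]; ring
  have hppw : ∀ i y, pd (pd w i) i y = 2 * (v y * pd (pd v i) i y) + 2 * (pd v i y) ^ 2 := by
    intro i y
    have hm : Differentiable ℝ (fun y => v y * pd v i y) := hd.mul (hpd i)
    rw [hpw, pd_const_mul hm, pd_mul hd (hpd i)]; ring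
  set F : E3 → ℝ := fun y => ∑ i, 2 * (pd v i y) ^ 2 with hF
  have hlapw : ∀ y, ∑ i, pd (pd w i) i y = F y := by
    intro y
    simp only [hppw, Finset.sum_add_distrib, hF]
    rw [← Finset.mul_sum, ← Finset.mul_sum]
    have := hh y
    unfold lap at this
    rw [this]; ring
  have hFc : Continuous F := by
    simp only [hF]
    exact continuous_finsetSum _ fun i _ => ((hpc i).continuous.pow 2).const_mul 2
  have hF0 : ∀ y, 0 ≤ F y := fun y => Finset.sum_nonneg fun i _ => by positivity
  have key : ∀ n, ∫ y, zt n y * F y = ∫ y, lap (zt n) y * w y := by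
    intro n
    have hz := zt_test n
    have e1 : ∀ i, ∫ y, zt n y * pd (pd w i) i y = ∫ y, pd (pd (zt n) i) i y * w y := by
      intro i
      rw [ibp hz.one hz.2.1 (pd_contDiff hwc (by norm_num) i),
        ibp (hz.pd i).one (hz.pd i).2.1 (hwc.of_le (by norm_num)), neg_neg]
    have i1 : ∀ i, Integrable (fun y => zt n y * pd (pd w i) i y) volume := fun i =>
      Continuous.integrable_of_hasCompactSupport (hz.one.continuous.mul
        (pd_contDiff (m := 0) (pd_contDiff (m := 1) hwc (by norm_num) i) (by norm_num) i).continuous) (hz.2.1.mul_right)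
    have i2 : ∀ i, Integrable (fun y => pd (pd (zt n) i) i y * w y) volume := fun i =>
      Continuous.integrable_of_hasCompactSupport (((hz.pd i).pd i).one.continuous.mul
        hwc.continuous) (((hz.pd i).pd i).2.1.mul_right)
    simp_rw [← hlapw, lap, Finset.mul_sum, Finset.sum_mul]
    rw [integral_finsetSum _ fun i _ => i1 i, integral_finsetSum _ fun i _ => i2 i]
    exact Finset.sum_congr rfl fun i _ => e1 i
  have hwi : Integrable w volume := by
    have := hL.integrable_sq
    refine this.congr (Eventually.of_forall fun y => ?_)
    simp only [hw]; ring
  obtain ⟨C, hC0, hC⟩ := zt_lap_bdd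
  have hle : ∀ n, ∫ y, zt n y * F y ≤ (C * ∫ y, |w y|) / ((n : ℝ) + 1) := by
    intro n
    rw [key n, mul_comm C, mul_div_assoc, mul_comm, ← integral_const_mul]
    refine (le_abs_self _).trans ?_
    rw [← Real.norm_eq_abs]
    refine (norm_integral_le_integral_norm _).trans ?_
    refine integral_mono_of_nonneg (Eventually.of_forall fun _ => norm_nonneg _) (hwi.abs.const_mul _)
      (Eventually.of_forall fun y => ?_)
    simp only [norm_mul, Real.norm_eq_abs]
    exact mul_le_mul_of_nonneg_right (hC n y) (abs_nonneg _)
  have hIntb : ∀ n, Integrable (fun y => zt n y * F y) volume := fun n =>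
    Continuous.integrable_of_hasCompactSupport ((zt_test n).one.continuous.mul hFc) ((zt_test n).2.1.mul_right)
  have hzero : ∀ m, ∫ y, zt m y * F y ≤ 0 := by
    intro m
    refine ge_of_tendsto (div_nat_tendsto (C * ∫ y, |w y|)) ?_
    filter_upwards [eventually_ge_atTop (2 * m + 1)] with n hn
    refine le_trans (integral_mono (hIntb m) (hIntb n) fun y => ?_) (hle n)
    refine mul_le_mul_of_nonneg_right ?_ (hF0 y)
    rcases le_total ‖y‖ ((n : ℝ) + 1) with h | h
    · rw [zt_one h]; exact zt_le_one _ _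
    · rw [zt_zero]; · exact zt_nonneg _ _
      have : ((2 * m + 1 : ℕ) : ℝ) ≤ n := by exact_mod_cast hn
      push_cast at this
      linarith
  have hFz : ∀ y, F y = 0 := by
    intro y
    by_contra hne
    obtain ⟨m, hm⟩ := (zt_tendsto y).exists
    have := Continuous.integral_pos_of_hasCompactSupport_nonneg_nonzero (μ := (volume : Measure E3))
      (f := fun y => zt m y * F y) (x := y) ((zt_test m).one.continuous.mul hFc) ((zt_test m).2.1.mul_right)
      (fun y => mul_nonneg (zt_nonneg _ _) (hF0 y)) (by simp [hm, hne])
    linarith [hzero m]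
  have hpz : ∀ i y, pd v i y = 0 := by
    intro i y
    have := (Finset.sum_eq_zero_iff_of_nonneg (fun i _ => by positivity)).1 (hFz y) i (Finset.mem_univ i)
    simpa using this
  have hconst : v = fun _ => v x := funext fun y => const_of_pd_zero hd hpz y x
  rw [hconst, memLp_const_iff (by norm_num) (by norm_num)] at hL
  rcases hL with h | h
  · exact h
  · simp at h

lemma lap_even (n : ℕ) (x : E3) : lap (kern n) (-x) = lap (kern n) x := by
  unfold lap
  refine Finset.sum_congr rfl fun i _ => ?_
  have h1 : ∀ y, pd (kern n) i (0 - y) = - pd (kern n) i y := by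
    intro y
    have := pd_reflect (kern n) 0 i y
    rw [← neg_eq_iff_eq_neg, ← this]
    congr 1; funext z; rw [zero_sub, kern_even]
  have h2 := pd_reflect (pd (kern n) i) 0 i x
  rw [show (fun y => pd (kern n) i (0 - y)) = fun y => (-1) * pd (kern n) i y by
    funext y; rw [h1]; ring, pd_const_mul ((kern_test n).pd i).differentiable, zero_sub] at h2
  linarith

lemma weak_harm_zero {g : E3 → ℝ} (hg : MemLp g 2 volume)
    (h : ∀ ψ, IsTest univ ψ → ∫ x, g x * lap ψ x = 0) : g =ᵐ[volume] 0 := by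
  have hgl : LocallyIntegrable g volume := hg.locallyIntegrable (by norm_num)
  have hz : ∀ n x, cvk (kern n) g x = 0 := by
    intro n
    have hk := kern_test n
    refine harm_zero (cvk_contDiff hk hgl) (cvk_memLp_two hk (kern_nonneg n) (kern_int n) hg) ?_
    intro x
    unfold lap
    have e : ∀ i, pd (pd (cvk (kern n) g) i) i = cvk (pd (pd (kern n) i) i) g := by
      intro i
      rw [cvk_pd hk hgl, cvk_pd (hk.pd i) hgl]
    simp_rw [e, cvk]
    rw [← integral_finsetSum _ fun i _ => cvk_int_aux ((hk.pd i).pd i) hgl x]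
    rw [← h _ (hk.translate x)]
    congr 1; funext y
    rw [← Finset.sum_mul, mul_comm]
    congr 1
    change lap (kern n) (x - y) = _
    rw [← lap_even, neg_sub]
    unfold lap
    refine Finset.sum_congr rfl fun i _ => ?_
    have : pd (fun y => kern n (y - x)) i = fun y => pd (kern n) i (y - x) := by
      funext z; exact pd_translate _ _ _ _
    rw [this, pd_translate]
  filter_upwards [kern_ae hgl] with x hx
  simp only [hz] at hx
  exact (tendsto_nhds_unique hx tendsto_const_nhds)

/-- the subspace of Laplacians of test functions -/
def lapSub : Submodule ℝ (Lp ℝ 2 (volume : Measure E3)) where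
  carrier := {f | ∃ ψ, IsTest univ ψ ∧ f =ᵐ[volume] lap ψ}
  zero_mem' := by
    refine ⟨fun _ => 0, isTest_iff.2 ⟨contDiff_const, HasCompactSupport.zero⟩, ?_⟩
    filter_upwards [Lp.coeFn_zero ℝ 2 (volume : Measure E3)] with x hx
    rw [hx]
    have : ∀ i, pd (fun _ : E3 => (0 : ℝ)) i = fun _ => 0 := by
      intro i; funext z; simp [pd]
    simp [lap, this]
  add_mem' := by
    rintro f g ⟨a, ha, hfa⟩ ⟨b, hb, hgb⟩
    refine ⟨fun y => a y + b y, ha.add hb, ?_⟩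
    filter_upwards [Lp.coeFn_add f g, hfa, hgb] with x hx h1 h2
    rw [hx, Pi.add_apply, h1, h2]
    unfold lap
    rw [← Finset.sum_add_distrib]
    refine Finset.sum_congr rfl fun i _ => ?_
    have : pd (fun y => a y + b y) i = fun y => pd a i y + pd b i y := by
      funext z; exact pd_add ha.differentiable hb.differentiable _ _
    rw [this, pd_add (ha.pd i).differentiable (hb.pd i).differentiable]
  smul_mem' := by
    rintro c f ⟨a, ha, hfa⟩
    refine ⟨fun y => c * a y, ha.const_mul c, ?_⟩
    filter_upwards [Lp.coeFn_smul c f, hfa] with x hx h1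
    rw [hx, Pi.smul_apply, h1]
    unfold lap
    rw [smul_eq_mul, Finset.mul_sum]
    refine Finset.sum_congr rfl fun i _ => ?_
    have : pd (fun y => c * a y) i = fun y => c * pd a i y := by
      funext z; exact pd_const_mul ha.differentiable _ _ _
    rw [this, pd_const_mul (ha.pd i).differentiable]

lemma inner_eq (f g : Lp ℝ 2 (volume : Measure E3)) : inner ℝ f g = ∫ x, f x * g x := by
  rw [L2.inner_def]
  congr 1; funext x
  simp [mul_comm]

lemma lapSub_dense : lapSub.topologicalClosure = ⊤ := by
  rw [Submodule.topologicalClosure_eq_top_iff, Submodule.eq_bot_iff]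
  intro g hg
  rw [Submodule.mem_orthogonal'] at hg
  have := weak_harm_zero (Lp.memLp g) (fun ψ hψ => ?_)
  · exact (Lp.eq_zero_iff_ae_eq_zero).2 this
  · have hm := (isTest_lap hψ).memLp 2
    have h2 := hg (hm.toLp _) ⟨ψ, hψ, hm.coeFn_toLp⟩
    rw [inner_eq] at h2
    rw [← h2]
    refine integral_congr_ae ?_
    filter_upwards [hm.coeFn_toLp] with x hx
    rw [hx]

lemma dual_bound {q : E3 → ℝ} (hq : MemLp q 2 volume) {A : ℝ} (hA : 0 ≤ A)
    (h : ∀ ψ, IsTest univ ψ → |∫ x, q x * lap ψ x| ≤ A * nrm 2 (lap ψ)) : nrm 2 q ≤ A := by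
  set Q := hq.toLp q with hQ
  have hn : nrm 2 q = ‖Q‖ := by
    rw [hQ, Lp.norm_toLp]; rfl
  have hcl : ∀ f : Lp ℝ 2 (volume : Measure E3), |inner ℝ Q f| ≤ A * ‖f‖ := by
    intro f
    have hf : f ∈ lapSub.topologicalClosure := by rw [lapSub_dense]; trivial
    have hc : IsClosed {f : Lp ℝ 2 (volume : Measure E3) | |inner ℝ Q f| ≤ A * ‖f‖} :=
      isClosed_le (by fun_prop) (by fun_prop)
    refine closure_minimal ?_ hc hf
    rintro g ⟨ψ, hψ, hg⟩
    have e := h ψ hψ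
    have e1 : inner ℝ Q g = ∫ x, q x * lap ψ x := by
      rw [inner_eq]
      refine integral_congr_ae ?_
      filter_upwards [hg, hq.coeFn_toLp] with x hx h2
      rw [hx, h2]
    have e2 : nrm 2 (lap ψ) = ‖g‖ := by
      rw [Lp.norm_def, nrm, eLpNorm_congr_ae hg]
    rw [mem_ofPred_eq, e1, ← e2]; exact e
  have := hcl Q
  rw [real_inner_self_eq_norm_sq, abs_of_nonneg (sq_nonneg _), pow_two] at this
  rw [hn]
  rcases eq_or_lt_of_le (norm_nonneg Q) with h0 | h0
  · rw [← h0]; exact hA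
  · exact le_of_mul_le_mul_right this h0

end Part3

section Part4
open scoped ENNReal NNReal ContDiff

instance ht663 : ENNReal.HolderTriple 6 6 3 := ⟨by
  rw [← ENNReal.toReal_eq_toReal_iff' (by simp) (by simp), ENNReal.toReal_add (by simp) (by simp)]; norm_num⟩
instance ht632 : ENNReal.HolderTriple 6 3 2 := ⟨by
  rw [← ENNReal.toReal_eq_toReal_iff' (by simp) (by simp), ENNReal.toReal_add (by simp) (by simp)]; norm_num⟩

lemma nrm_abs (p : ℝ≥0∞) (f : E3 → ℝ) : nrm p (fun x => |f x|) = nrm p f := by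
  unfold nrm
  exact congrArg _ (eLpNorm_norm f)

/-- componentwise data of the problem -/
structure Dat (μ η γ : ℝ) (dG : E3 → Fin 3 → ℝ) (ρ : E3 → ℝ) (u : E3 → Fin 3 → ℝ)
    (du : E3 → Fin 3 → Fin 3 → ℝ) (Gn : ℕ → E3 → ℝ) (un : ℕ → E3 → Fin 3 → ℝ) : Prop where
  hμ : 0 < μ
  hη : 0 ≤ η
  hγ1 : 3 ≤ γ
  hγ2 : γ < 6
  ρ0 : ∀ x, 0 ≤ ρ x
  ρL : MemLp ρ (ENNReal.ofReal γ) volume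
  mass : ∀ φ : E3 → ℝ, IsTest univ φ → ∫ x, ρ x * (∑ i, u x i * pd φ i x) = 0
  unT : ∀ n i, IsTest univ (fun x => un n x i)
  uL : ∀ i, LpT 6 (fun n x => un n x i) (fun x => u x i)
  duL : ∀ i j, LpT 2 (fun n x => pd (fun y => un n y i) j x) (fun x => du x i j)
  GT : ∀ n, IsTest univ (Gn n)
  dGL : ∀ i, LpT (ENNReal.ofReal (6 * γ / (5 * γ - 6))) (fun n x => pd (Gn n) i x) (fun x => dG x i)
  mom : ∀ φ : Fin 3 → E3 → ℝ, (∀ i, IsTest univ (φ i)) →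
    ∫ x, ((∑ i, ∑ j, ρ x * u x i * u x j * pd (φ i) j x)
        + ρ x ^ γ * (∑ i, pd (φ i) i x))
      = (∫ x, ∑ i, ∑ j, Smat μ η (du x) i j * pd (φ i) j x)
        - ∫ x, ∑ i, ρ x * dG x i * φ i x

section
variable {μ η γ : ℝ} {dG : E3 → Fin 3 → ℝ} {ρ : E3 → ℝ} {u : E3 → Fin 3 → ℝ}
    {du : E3 → Fin 3 → Fin 3 → ℝ} {Gn : ℕ → E3 → ℝ} {un : ℕ → E3 → Fin 3 → ℝ}

lemma Dat.P_int (D : Dat μ η γ dG ρ u du Gn un) : Integrable (fun x => ρ x ^ γ) volume := by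
  have h := D.ρL.integrable_norm_rpow (by simp; linarith [D.hγ1]) (by simp)
  rw [ENNReal.toReal_ofReal (by linarith [D.hγ1])] at h
  refine h.congr (Eventually.of_forall fun x => ?_)
  simp only [Real.norm_of_nonneg (D.ρ0 x)]

lemma Dat.Z_mem (D : Dat μ η γ dG ρ u du Gn un) : MemLp (fun x => ρ x ^ (γ / 2)) 2 volume := by
  have hm : AEStronglyMeasurable (fun x => ρ x ^ (γ / 2)) volume :=
    (D.ρL.1.aemeasurable.pow_const _).aestronglyMeasurable
  rw [memLp_two_iff_integrable_sq hm]
  refine D.P_int.congr (Eventually.of_forall fun x => ?_)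
  simp only
  rw [← Real.rpow_natCast, ← Real.rpow_mul (D.ρ0 x)]
  norm_num

lemma Dat.u3_mem (D : Dat μ η γ dG ρ u du Gn un) (i : Fin 3) :
    MemLp (fun x => |u x i| ^ 3) 2 volume := by
  have h := (D.uL i).2.1.abs
  have h3 : MemLp (fun x => |u x i| * |u x i|) 3 volume := h.mul h
  have h2 : MemLp (fun x => |u x i| * (|u x i| * |u x i|)) 2 volume := h3.mul h
  have e : (fun x => |u x i| ^ 3) = fun x => |u x i| * (|u x i| * |u x i|) := by
    funext x; ring
  rw [e]; exact h2

lemma Dat.S_mem (D : Dat μ η γ dG ρ u du Gn un) (i j : Fin 3) :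
    MemLp (fun x => Smat μ η (du x) i j) 2 volume := by
  have h := fun i j => (D.duL i j).2.1
  have ht : MemLp (fun x => ∑ k, du x k k) 2 volume := memLp_finsetSum _ fun k _ => h k k
  have e : (fun x => Smat μ η (du x) i j) = fun x => μ * du x i j + μ * du x j i
      + ((η - 2 / 3 * μ) * (if i = j then (1 : ℝ) else 0)) * ∑ k, du x k k := by
    funext x; unfold Smat; ring
  rw [e]
  exact (((h i j).const_mul μ).add ((h j i).const_mul μ)).add (ht.const_mul _)

lemma young_pt {γ : ℝ} (h1 : 3 ≤ γ) (h2 : γ < 6) {d : ℝ} (hd : 0 < d) {s t : ℝ} (hs : 0 ≤ s) (ht : 0 ≤ t) :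
    s * t ^ 2 ≤ d ^ 2 * (s ^ γ + s ^ (γ / 2)) + t ^ 3 / d := by
  have h3 : s ^ 3 ≤ s ^ γ + s ^ (γ / 2) := by
    have p1 : 0 ≤ s ^ γ := Real.rpow_nonneg hs _
    have p2 : 0 ≤ s ^ (γ / 2) := Real.rpow_nonneg hs _
    rcases le_total s 1 with h | h
    · rcases eq_or_lt_of_le hs with h0 | h0
      · rw [← h0] at p1 p2 ⊢; simp; positivity
      · have := Real.rpow_le_rpow_of_exponent_ge h0 h (show γ / 2 ≤ ((3 : ℕ) : ℝ) by norm_num; linarith)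
        rw [Real.rpow_natCast] at this; linarith
    · have := Real.rpow_le_rpow_of_exponent_le h (show ((3 : ℕ) : ℝ) ≤ γ by norm_num; linarith)
      rw [Real.rpow_natCast] at this; linarith
  have h4 : s * t ^ 2 ≤ d ^ 2 * s ^ 3 + t ^ 3 / d := by
    rcases le_total t (d * s) with h | h
    · have : s * t ^ 2 ≤ s * (d * s) ^ 2 := by gcongr
      have h5 : 0 ≤ t ^ 3 / d := by positivity
      nlinarith
    · have : s ≤ t / d := by rw [le_div_iff₀ hd]; linarith
      have h5 : s * t ^ 2 ≤ t / d * t ^ 2 := by gcongr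
      have h6 : t / d * t ^ 2 = t ^ 3 / d := by ring
      have h7 : 0 ≤ d ^ 2 * s ^ 3 := by positivity
      linarith
  have := mul_le_mul_of_nonneg_left h3 (sq_nonneg d)
  linarith

/-- the `L²` majorant -/
def Yd (γ d : ℝ) (ρ : E3 → ℝ) (u : E3 → Fin 3 → ℝ) (x : E3) : ℝ :=
  d ^ 2 * ρ x ^ (γ / 2) + ∑ k, 1 / d * |u x k| ^ 3

lemma Dat.Y_mem (D : Dat μ η γ dG ρ u du Gn un) (d : ℝ) : MemLp (Yd γ d ρ u) 2 volume := by
  unfold Yd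
  exact (D.Z_mem.const_mul _).add (memLp_finsetSum _ fun k _ => (D.u3_mem k).const_mul _)

lemma Dat.conv_le (D : Dat μ η γ dG ρ u du Gn un) {d : ℝ} (hd : 0 < d) (i j : Fin 3) (x : E3) :
    |ρ x * u x i * u x j| ≤ d ^ 2 * ρ x ^ γ + Yd γ d ρ u x := by
  have hi := young_pt D.hγ1 D.hγ2 hd (D.ρ0 x) (abs_nonneg (u x i))
  have hj := young_pt D.hγ1 D.hγ2 hd (D.ρ0 x) (abs_nonneg (u x j))
  have e1 : ∀ k, |u x k| ^ 3 / d ≤ ∑ k, 1 / d * |u x k| ^ 3 := by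
    intro k
    rw [div_eq_inv_mul, ← one_div]
    exact Finset.single_le_sum (f := fun k => 1 / d * |u x k| ^ 3) (fun l _ => by positivity) (Finset.mem_univ k)
  have hi2 := e1 i
  have hj2 := e1 j
  rw [abs_mul, abs_mul, abs_of_nonneg (D.ρ0 x), mul_assoc]
  have h2 : |u x i| * |u x j| ≤ (|u x i| ^ 2 + |u x j| ^ 2) / 2 := by
    nlinarith [sq_nonneg (|u x i| - |u x j|)]
  have h3 := mul_le_mul_of_nonneg_left h2 (D.ρ0 x)
  unfold Yd
  linarith

lemma Dat.conv_meas (D : Dat μ η γ dG ρ u du Gn un) (i j : Fin 3) :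
    AEStronglyMeasurable (fun x => ρ x * u x i * u x j) volume :=
  (D.ρL.1.mul (D.uL i).2.1.1).mul (D.uL j).2.1.1

lemma Dat.conv_int (D : Dat μ η γ dG ρ u du Gn un) (i j : Fin 3) {g : E3 → ℝ} (hg : IsTest univ g) :
    Integrable (fun x => ρ x * u x i * u x j * g x) volume := by
  obtain ⟨C, hC0, hC⟩ := hg.bdd
  have h1 : Integrable (fun x => C * ρ x ^ γ + Yd γ 1 ρ u x * |g x|) volume :=
    (D.P_int.const_mul C).add ((D.Y_mem 1).integrable_mul (hg.memLp 2).abs)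
  refine h1.mono' ((D.conv_meas i j).mul hg.1.continuous.aestronglyMeasurable)
    (Eventually.of_forall fun x => ?_)
  rw [norm_mul, Real.norm_eq_abs, Real.norm_eq_abs]
  have := mul_le_mul_of_nonneg_right (D.conv_le one_pos i j x) (abs_nonneg (g x))
  have h3 := mul_le_mul_of_nonneg_left (hC x) (Real.rpow_nonneg (D.ρ0 x) γ)
  nlinarith

lemma Dat.P_int_mul (D : Dat μ η γ dG ρ u du Gn un) {g : E3 → ℝ} (hg : IsTest univ g) :
    Integrable (fun x => ρ x ^ γ * g x) volume := by
  obtain ⟨C, hC0, hC⟩ := hg.bdd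
  exact D.P_int.mul_bdd hg.1.continuous.aestronglyMeasurable (Eventually.of_forall hC)

/-- intermediate exponent -/
def rexp (γ : ℝ) : ℝ≥0∞ := ENNReal.ofReal (6 * γ / (γ + 6))

lemma ht1 {γ : ℝ} (h : 3 ≤ γ) : ENNReal.HolderTriple (ENNReal.ofReal γ) 6 (rexp γ) := ⟨by
  have h0 : 0 < γ := by linarith
  have e6 : (6 : ℝ≥0∞) = ENNReal.ofReal 6 := by simp
  unfold rexp
  rw [e6, ← ENNReal.ofReal_inv_of_pos h0, ← ENNReal.ofReal_inv_of_pos (by norm_num),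
    ← ENNReal.ofReal_inv_of_pos (by positivity), ← ENNReal.ofReal_add (by positivity) (by positivity)]
  congr 1; field_simp; ring⟩

lemma ht2 {γ : ℝ} (h : 3 ≤ γ) :
    ENNReal.HolderTriple (rexp γ) (ENNReal.ofReal (6 * γ / (5 * γ - 6))) 1 := ⟨by
  have h0 : 0 < γ := by linarith
  have h1 : 0 < 5 * γ - 6 := by linarith
  unfold rexp
  rw [← ENNReal.ofReal_inv_of_pos (by positivity), ← ENNReal.ofReal_inv_of_pos (by positivity),
    ← ENNReal.ofReal_add (by positivity) (by positivity), inv_one, ← ENNReal.ofReal_one]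
  congr 1; field_simp; ring⟩

lemma Dat.force (D : Dat μ η γ dG ρ u du Gn un) (i : Fin 3) {g : E3 → ℝ} (hg : MemLp g 6 volume) :
    Integrable (fun x => ρ x * dG x i * g x) volume ∧
    |∫ x, ρ x * dG x i * g x| ≤ nrm (ENNReal.ofReal γ) ρ * nrm 6 g *
      nrm (ENNReal.ofReal (6 * γ / (5 * γ - 6))) (fun x => dG x i) := by
  have := ht1 D.hγ1
  have := ht2 D.hγ1
  have h1 : MemLp (fun x => ρ x * g x) (rexp γ) volume := hg.mul D.ρL
  have h2 : MemLp (fun x => (ρ x * g x) * dG x i) 1 volume := (D.dGL i).2.1.mul h1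
  have e : (fun x => (ρ x * g x) * dG x i) = fun x => ρ x * dG x i * g x := by
    funext x; ring
  constructor
  · rw [← e]; exact memLp_one_iff_integrable.1 h2
  · rw [← e]
    refine (holder_abs (p := rexp γ) h1 (D.dGL i).2.1).trans ?_
    exact mul_le_mul_of_nonneg_right (nrm_mul_le D.ρL hg) (nrm_nonneg _ _)

lemma Dat.basic (D : Dat μ η γ dG ρ u du Gn un) {d : ℝ} (hd : 0 < d) : ∃ A : ℝ, 0 ≤ A ∧
    ∀ ψ, IsTest univ ψ → |∫ x, ρ x ^ γ * lap ψ x| ≤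
      d ^ 2 * (∑ i, ∑ j, ∫ x, ρ x ^ γ * |pd (pd ψ i) j x|) + A * nrm 2 (lap ψ) := by
  obtain ⟨CS, hCS0, hCS⟩ := sobolev
  set q := ENNReal.ofReal (6 * γ / (5 * γ - 6)) with hq
  refine ⟨∑ i : Fin 3, ∑ j : Fin 3, (nrm 2 (Yd γ d ρ u)) + (∑ i, ∑ j, nrm 2 (fun x => Smat μ η (du x) i j))
    + ∑ i, nrm (ENNReal.ofReal γ) ρ * (CS * 3) * nrm q (fun x => dG x i), ?_, ?_⟩
  · have : ∀ p f, 0 ≤ nrm p f := nrm_nonneg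
    refine add_nonneg (add_nonneg ?_ ?_) ?_
    · exact Finset.sum_nonneg fun i _ => Finset.sum_nonneg fun j _ => this _ _
    · exact Finset.sum_nonneg fun i _ => Finset.sum_nonneg fun j _ => this _ _
    · exact Finset.sum_nonneg fun i _ => mul_nonneg (mul_nonneg (this _ _) (by positivity)) (this _ _)
  intro ψ hψ
  have hT : ∀ i j, IsTest univ (pd (pd ψ i) j) := fun i j => (hψ.pd i).pd j
  have hm := D.mom (fun i => pd ψ i) (fun i => hψ.pd i)
  have i1 : ∀ i j, Integrable (fun x => ρ x * u x i * u x j * pd (pd ψ i) j x) volume :=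
    fun i j => D.conv_int i j (hT i j)
  have i2 : Integrable (fun x => ρ x ^ γ * lap ψ x) volume := D.P_int_mul (isTest_lap hψ)
  have i3 : ∀ i j, Integrable (fun x => Smat μ η (du x) i j * pd (pd ψ i) j x) volume :=
    fun i j => (D.S_mem i j).integrable_mul ((hT i j).memLp 2)
  have i4 : ∀ i, Integrable (fun x => ρ x * dG x i * pd ψ i x) volume :=
    fun i => (D.force i ((hψ.pd i).memLp 6)).1
  have i1' := integrable_finsetSum Finset.univ fun i _ => integrable_finsetSum Finset.univ fun j _ => i1 i j
  change ∫ x, ((∑ i, ∑ j, ρ x * u x i * u x j * pd (pd ψ i) j x) + ρ x ^ γ * lap ψ x) = _ at hm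
  rw [integral_add i1' i2, integral_finsetSum _ fun i _ => integrable_finsetSum Finset.univ fun j _ => i1 i j,
    integral_finsetSum _ fun i _ => integrable_finsetSum Finset.univ fun j _ => i3 i j,
    integral_finsetSum _ fun i _ => i4 i] at hm
  simp_rw [integral_finsetSum _ fun j _ => i1 _ j, integral_finsetSum _ fun j _ => i3 _ j] at hm
  set L := nrm 2 (lap ψ) with hL
  have hL0 : 0 ≤ L := nrm_nonneg _ _
  have b1 : ∀ i j, |∫ x, ρ x * u x i * u x j * pd (pd ψ i) j x| ≤
      d ^ 2 * (∫ x, ρ x ^ γ * |pd (pd ψ i) j x|) + nrm 2 (Yd γ d ρ u) * L := by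
    intro i j
    have ha : Integrable (fun x => ρ x ^ γ * |pd (pd ψ i) j x|) volume := by
      refine (D.P_int_mul (hT i j)).abs.congr (Eventually.of_forall fun x => ?_)
      simp only [abs_mul, abs_of_nonneg (Real.rpow_nonneg (D.ρ0 x) γ)]
    have hb : Integrable (fun x => Yd γ d ρ u x * |pd (pd ψ i) j x|) volume :=
      (D.Y_mem d).integrable_mul ((hT i j).memLp 2).abs
    have hh := holder_abs (D.Y_mem d) ((hT i j).memLp 2).abs
    have e : nrm 2 (fun x => |pd (pd ψ i) j x|) = nrm 2 (pd (pd ψ i) j) :=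
      nrm_abs _ _
    change _ ≤ _ * nrm 2 (fun x => |pd (pd ψ i) j x|) at hh
    rw [e] at hh
    have hh2 : ∫ x, Yd γ d ρ u x * |pd (pd ψ i) j x| ≤ nrm 2 (Yd γ d ρ u) * L :=
      (le_abs_self _).trans (hh.trans (mul_le_mul_of_nonneg_left (nrm_pd2_le hψ i j) (nrm_nonneg _ _)))
    calc |∫ x, ρ x * u x i * u x j * pd (pd ψ i) j x|
        ≤ ∫ x, |ρ x * u x i * u x j * pd (pd ψ i) j x| := abs_integral_le_integral_abs
      _ ≤ ∫ x, (d ^ 2 * (ρ x ^ γ * |pd (pd ψ i) j x|) + Yd γ d ρ u x * |pd (pd ψ i) j x|) := by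
          refine integral_mono (i1 i j).abs ((ha.const_mul _).add hb) fun x => ?_
          have := mul_le_mul_of_nonneg_right (D.conv_le hd i j x) (abs_nonneg (pd (pd ψ i) j x))
          simp only
          rw [abs_mul]
          linarith
      _ = d ^ 2 * (∫ x, ρ x ^ γ * |pd (pd ψ i) j x|) + ∫ x, Yd γ d ρ u x * |pd (pd ψ i) j x| := by
          rw [integral_add (ha.const_mul _) hb, integral_const_mul]
      _ ≤ _ := by linarith
  have b3 : ∀ i j, |∫ x, Smat μ η (du x) i j * pd (pd ψ i) j x| ≤
      nrm 2 (fun x => Smat μ η (du x) i j) * L := fun i j =>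
    (holder_abs (D.S_mem i j) ((hT i j).memLp 2)).trans
      (mul_le_mul_of_nonneg_left (nrm_pd2_le hψ i j) (nrm_nonneg _ _))
  have b4 : ∀ i, |∫ x, ρ x * dG x i * pd ψ i x| ≤
      nrm (ENNReal.ofReal γ) ρ * (CS * 3) * nrm q (fun x => dG x i) * L := by
    intro i
    have h6 : nrm 6 (pd ψ i) ≤ CS * 3 * L := by
      refine (hCS _ (hψ.pd i)).trans ?_
      rw [mul_assoc]
      refine mul_le_mul_of_nonneg_left ?_ hCS0
      calc ∑ j, nrm 2 (pd (pd ψ i) j) ≤ ∑ j : Fin 3, L := Finset.sum_le_sum fun j _ => nrm_pd2_le hψ i j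
        _ = 3 * L := by simp
    refine (D.force i ((hψ.pd i).memLp 6)).2.trans ?_
    calc _ ≤ nrm (ENNReal.ofReal γ) ρ * (CS * 3 * L) * nrm q (fun x => dG x i) := by
          refine mul_le_mul_of_nonneg_right (mul_le_mul_of_nonneg_left h6 (nrm_nonneg _ _)) (nrm_nonneg _ _)
      _ = _ := by ring
  have key : ∫ x, ρ x ^ γ * lap ψ x = (∑ i, ∑ j, ∫ x, Smat μ η (du x) i j * pd (pd ψ i) j x)
      - (∑ i, ∫ x, ρ x * dG x i * pd ψ i x) - ∑ i, ∑ j, ∫ x, ρ x * u x i * u x j * pd (pd ψ i) j x := by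
    linarith
  rw [key]
  refine (abs_sub _ _).trans ?_
  have t1 : |∑ i, ∑ j, ∫ x, ρ x * u x i * u x j * pd (pd ψ i) j x| ≤
      ∑ i, ∑ j, (d ^ 2 * (∫ x, ρ x ^ γ * |pd (pd ψ i) j x|) + nrm 2 (Yd γ d ρ u) * L) :=
    (Finset.abs_sum_le_sum_abs _ _).trans (Finset.sum_le_sum fun i _ =>
      (Finset.abs_sum_le_sum_abs _ _).trans (Finset.sum_le_sum fun j _ => b1 i j))
  have t2 : |∑ i, ∑ j, ∫ x, Smat μ η (du x) i j * pd (pd ψ i) j x| ≤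
      ∑ i, ∑ j, nrm 2 (fun x => Smat μ η (du x) i j) * L :=
    (Finset.abs_sum_le_sum_abs _ _).trans (Finset.sum_le_sum fun i _ =>
      (Finset.abs_sum_le_sum_abs _ _).trans (Finset.sum_le_sum fun j _ => b3 i j))
  have t3 : |∑ i, ∫ x, ρ x * dG x i * pd ψ i x| ≤
      ∑ i, nrm (ENNReal.ofReal γ) ρ * (CS * 3) * nrm q (fun x => dG x i) * L :=
    (Finset.abs_sum_le_sum_abs _ _).trans (Finset.sum_le_sum fun i _ => b4 i)
  have t4 := abs_sub (∑ i, ∑ j, ∫ x, Smat μ η (du x) i j * pd (pd ψ i) j x)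
    (∑ i, ∫ x, ρ x * dG x i * pd ψ i x)
  simp_rw [Finset.sum_add_distrib, ← Finset.mul_sum, ← Finset.sum_mul] at t1 t2 t3
  rw [add_mul, add_mul]
  have t5 : (∑ i : Fin 3, ∑ j : Fin 3, nrm 2 (Yd γ d ρ u)) * L
      = nrm 2 (Yd γ d ρ u) * ∑ i : Fin 3, ∑ j : Fin 3, L := by
    simp only [Finset.sum_const, Finset.card_univ, Fintype.card_fin, nsmul_eq_mul]; ring
  rw [t5]
  linarith
end

end Part4

section Part5
open scoped ENNReal NNReal ContDiff

lemma moll_swap {k P g : E3 → ℝ} (hk : IsTest univ k) (hP : Integrable P volume) (hg : Continuous g)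
    {C : ℝ} (hC : ∀ x, |g x| ≤ C) :
    Integrable (fun h => k h * ∫ x, P x * g (x + h)) volume ∧
    ∫ y, cvk k P y * g y = ∫ h, k h * ∫ x, P x * g (x + h) := by
  have h1 := hk.integrable.convolution_integrand (ContinuousLinearMap.lsmul ℝ ℝ) hP
  have h2 : Integrable (fun p : E3 × E3 => (k p.2 * P (p.1 - p.2)) * g p.1) (volume.prod volume) :=
    h1.mul_bdd (hg.comp continuous_fst).aestronglyMeasurable (Eventually.of_forall fun p => hC p.1)
  have e : ∀ h, ∫ y, (k h * P (y - h)) * g y = k h * ∫ x, P x * g (x + h) := by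
    intro h
    rw [← integral_const_mul, ← integral_sub_right_eq_self (μ := volume) (fun x => k h * (P x * g (x + h))) h]
    congr 1; funext y; rw [sub_add_cancel]; ring
  constructor
  · have := h2.integral_prod_right
    refine this.congr (Eventually.of_forall fun h => ?_)
    exact e h
  · have hs := integral_integral_swap (f := fun y h => (k h * P (y - h)) * g y) h2
    simp_rw [e] at hs
    rw [← hs]
    congr 1; funext y
    rw [integral_mul_const]
    congr 1
    unfold cvk
    rw [← integral_sub_left_eq_self (fun h => k h * P (y - h)) volume y]
    congr 1; funext z; rw [sub_sub_cancel]

section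
variable {μ η γ : ℝ} {dG : E3 → Fin 3 → ℝ} {ρ : E3 → ℝ} {u : E3 → Fin 3 → ℝ}
    {du : E3 → Fin 3 → Fin 3 → ℝ} {Gn : ℕ → E3 → ℝ} {un : ℕ → E3 → Fin 3 → ℝ}

lemma pd2_translate (ψ : E3 → ℝ) (h : E3) (i j : Fin 3) (x : E3) :
    pd (pd (fun y => ψ (y - h)) i) j x = pd (pd ψ i) j (x - h) := by
  have : pd (fun y => ψ (y - h)) i = fun y => pd ψ i (y - h) := by
    funext z; exact pd_translate _ _ _ _
  rw [this, pd_translate]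

lemma nrm_translate {f : E3 → ℝ} (p : ℝ≥0∞) (hf : AEStronglyMeasurable f volume) (h : E3) :
    nrm p (fun x => f (x + h)) = nrm p f := by
  unfold nrm
  congr 1
  exact eLpNorm_comp_measurePreserving hf (measurePreserving_add_right volume h)

lemma Dat.P_mem_two (D : Dat μ η γ dG ρ u du Gn un) : MemLp (fun x => ρ x ^ γ) 2 volume := by
  obtain ⟨A, hA0, hA⟩ := D.basic (d := 1 / 6) (by norm_num)
  set P : E3 → ℝ := fun x => ρ x ^ γ with hP
  have hPi : Integrable P volume := D.P_int
  have hbound : ∀ n, nrm 2 (cvk (kern n) P) ≤ 2 * A := by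
    intro n
    have hk := kern_test n
    have hq := cvk_memLp_two_of_L1 hk hPi
    set Q := nrm 2 (cvk (kern n) P) with hQ
    have hQ0 : 0 ≤ Q := nrm_nonneg _ _
    have : Q ≤ 1 / 4 * Q + A := by
      refine dual_bound hq (by positivity) fun ψ hψ => ?_
      have hT : ∀ i j, IsTest univ (pd (pd ψ i) j) := fun i j => (hψ.pd i).pd j
      obtain ⟨C, hC0, hC⟩ := (isTest_lap hψ).bdd
      choose K hK0 hK using fun i j => (hT i j).bdd
      have m1 := moll_swap hk hPi (isTest_lap hψ).1.continuous hC
      have m2 : ∀ i j, _ := fun i j => moll_swap hk hPi (hT i j).1.continuous.abs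
        (fun x => by rw [abs_abs]; exact hK i j x)
      set L := nrm 2 (lap ψ)
      have hh : ∀ h, |∫ x, P x * lap ψ (x + h)| ≤
          (1 / 6) ^ 2 * (∑ i, ∑ j, ∫ x, P x * |pd (pd ψ i) j (x + h)|) + A * L := by
        intro h
        have := hA _ (hψ.translate (-h))
        have e1 : lap (fun y => ψ (y - -h)) = fun x => lap ψ (x + h) := by
          funext x; unfold lap
          simp_rw [pd2_translate, sub_neg_eq_add]
        rw [e1, nrm_translate 2 (isTest_lap hψ).1.continuous.aestronglyMeasurable h] at this
        simp_rw [pd2_translate, sub_neg_eq_add] at this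
        exact this
      have i2 : Integrable (fun h => ∑ i, ∑ j, kern n h * ∫ x, P x * |pd (pd ψ i) j (x + h)|) volume :=
        integrable_finsetSum _ fun i _ => integrable_finsetSum _ fun j _ => (m2 i j).1
      have i3 : Integrable (fun h => A * L * kern n h) volume := hk.integrable.const_mul _
      rw [m1.2]
      calc |∫ h, kern n h * ∫ x, P x * lap ψ (x + h)|
          ≤ ∫ h, |kern n h * ∫ x, P x * lap ψ (x + h)| := abs_integral_le_integral_abs
        _ ≤ ∫ h, ((1 / 6) ^ 2 * (∑ i, ∑ j, kern n h * ∫ x, P x * |pd (pd ψ i) j (x + h)|)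
              + A * L * kern n h) := by
            refine integral_mono m1.1.abs ((i2.const_mul _).add i3) fun h => ?_
            simp only
            rw [abs_mul, abs_of_nonneg (kern_nonneg n h)]
            have := mul_le_mul_of_nonneg_left (hh h) (kern_nonneg n h)
            simp_rw [← Finset.mul_sum]
            linarith
        _ = (1 / 6) ^ 2 * (∑ i, ∑ j, ∫ y, cvk (kern n) P y * |pd (pd ψ i) j y|) + A * L := by
            rw [integral_add (i2.const_mul _) i3, integral_const_mul, integral_const_mul, kern_int, mul_one,
              integral_finsetSum _ fun i _ => integrable_finsetSum _ fun j _ => (m2 i j).1]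
            simp_rw [integral_finsetSum _ fun j _ => (m2 _ j).1, (m2 _ _).2]
        _ ≤ (1 / 6) ^ 2 * (∑ i : Fin 3, ∑ j : Fin 3, Q * L) + A * L := by
            gcongr with i _ j _
            refine (le_abs_self _).trans ?_
            refine (holder_abs hq ((hT i j).memLp 2).abs).trans ?_
            change Q * nrm 2 (fun x => |pd (pd ψ i) j x|) ≤ _
            rw [nrm_abs]
            exact mul_le_mul_of_nonneg_left (nrm_pd2_le hψ i j) hQ0
        _ = (1 / 4 * Q + A) * L := by
            simp only [Finset.sum_const, Finset.card_univ, Fintype.card_fin, nsmul_eq_mul]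
            push_cast; ring
    linarith
  refine ⟨hPi.1, ?_⟩
  have hmeas : ∀ n, AEStronglyMeasurable (cvk (kern n) P) volume := fun n =>
    (cvk_contDiff (kern_test n) hPi.locallyIntegrable).continuous.aestronglyMeasurable
  have hf := Lp.eLpNorm_lim_le_liminf_eLpNorm (p := 2) hmeas P (kern_ae hPi.locallyIntegrable)
  refine hf.trans_lt ?_
  refine lt_of_le_of_lt ?_ (ENNReal.ofReal_lt_top (r := 2 * A))
  refine liminf_le_of_le (by isBoundedDefault) (fun b hb => ?_)
  obtain ⟨n, hn⟩ := hb.exists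
  refine hn.trans ?_
  have := hbound n
  rw [nrm, ← ENNReal.ofReal_le_ofReal_iff (by positivity), ENNReal.ofReal_toReal] at this
  · exact this
  · exact (cvk_memLp_two_of_L1 (kern_test n) hPi).2.ne

lemma Dat.ρ6 (D : Dat μ η γ dG ρ u du Gn un) : MemLp ρ 6 volume := by
  have h2 := D.P_mem_two.integrable_sq
  have h1 := D.P_int
  have h : Integrable (fun x => ‖ρ x‖ ^ (6 : ℝ≥0∞).toReal) volume := by
    refine (h1.add h2).mono' (D.ρL.1.norm.aemeasurable.pow_const _).aestronglyMeasurable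
      (Eventually.of_forall fun x => ?_)
    have hx := D.ρ0 x
    simp only [Pi.add_apply, ENNReal.toReal_ofNat]
    rw [Real.norm_of_nonneg hx, Real.norm_of_nonneg (by positivity)]
    have p1 : 0 ≤ ρ x ^ γ := Real.rpow_nonneg hx _
    have e : (ρ x ^ γ) ^ 2 = ρ x ^ (γ * 2) := by
      rw [Real.rpow_mul hx]; norm_num
    rw [e]
    have p2 : 0 ≤ ρ x ^ (γ * 2) := Real.rpow_nonneg hx _
    rcases le_total (ρ x) 1 with h | h
    · rcases eq_or_lt_of_le hx with h0 | h0
      · rw [← h0] at p1 p2 ⊢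
        rw [Real.zero_rpow (by norm_num)]; linarith
      · have := Real.rpow_le_rpow_of_exponent_ge h0 h D.hγ2.le
        linarith
    · have := Real.rpow_le_rpow_of_exponent_le h (show (6 : ℝ) ≤ γ * 2 by linarith [D.hγ1])
      linarith
  exact (integrable_norm_rpow_iff D.ρL.1 (by norm_num) (by norm_num)).1 h
end

end Part5

section Part6
open scoped ENNReal NNReal ContDiff

lemma trans_cont {p : ℝ≥0∞} [Fact (1 ≤ p)] (hp : p ≠ ⊤) {f : E3 → ℝ} (hf : MemLp f p volume)
    {ε : ℝ} (hε : 0 < ε) : ∃ r > 0, ∀ h : E3, ‖h‖ ≤ r → nrm p (fun x => f (x - h) - f x) ≤ ε := by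
  let gg : C(E3 × E3, E3) := ⟨fun z => z.2 - z.1, by fun_prop⟩
  have hgm : ∀ z, MeasurePreserving (gg.curry z) (volume : Measure E3) volume := fun z =>
    measurePreserving_sub_right volume z
  have hc := Continuous.compMeasurePreservingLp (p := p) (f := fun _ : E3 => hf.toLp f)
    (g := gg.curry) continuous_const gg.curry.continuous hgm hp
  have h0 := Metric.continuous_iff.1 hc 0 ε hε
  obtain ⟨r, hr, h⟩ := h0
  refine ⟨r / 2, by positivity, fun z hz => ?_⟩
  have h1 := h z (by rw [dist_zero_right]; linarith)
  have e : ∀ z, Lp.compMeasurePreserving (gg.curry z) (hgm z) (hf.toLp f)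
      = (hf.comp_measurePreserving (hgm z)).toLp _ := fun z => Lp.toLp_compMeasurePreserving hf (hgm z)
  simp only [e] at h1
  rw [dist_eq_norm, ← MemLp.toLp_sub, Lp.norm_toLp] at h1
  refine le_of_eq_of_le ?_ h1.le
  unfold nrm
  congr 2
  funext x
  simp [gg]

lemma clm_norm_le (L : E3 →L[ℝ] ℝ) : ‖L‖ ≤ ∑ i, |L (EuclideanSpace.single i 1)| := by
  have := fderiv_norm_le (fun x => L x) 0
  simpa [pd] using this

lemma clm_expand (L : E3 →L[ℝ] ℝ) (v : E3) : L v = ∑ i, v i * L (EuclideanSpace.single i 1) := by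
  have hv : v = ∑ i, v i • EuclideanSpace.single i (1 : ℝ) := by
    ext j; fin_cases j <;> simp [Fin.sum_univ_three]
  conv_lhs => rw [hv, map_sum]
  simp

lemma taylor_test {w Ψ : E3 → ℝ} (hw : IsTest univ w) (hΨ : MemLp Ψ 2 volume) {r om : ℝ}
    (hom : ∀ ξ : E3, ‖ξ‖ ≤ r → ∀ j, nrm 2 (fun x => pd w j (x - ξ) - pd w j x) ≤ om)
    {h : E3} (hh : ‖h‖ ≤ r) :
    |∫ x, Ψ x * (w x - w (x - h) - ∑ j, h j * pd w j x)| ≤ 3 * nrm 2 Ψ * om * ‖h‖ := by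
  have hΨl : LocallyIntegrable Ψ volume := hΨ.locallyIntegrable (by norm_num)
  have hk := hw.reflect 0
  set k : E3 → ℝ := fun z => w (0 - z) with hkdef
  set A := cvk k Ψ with hA
  have hAd : ContDiff ℝ ∞ A := cvk_contDiff hk hΨl
  have hAv : ∀ ξ, A ξ = ∫ x, Ψ x * w (x - ξ) := by
    intro ξ; rw [hA]; unfold cvk
    congr 1; funext y
    rw [hkdef]; simp only [zero_sub, neg_sub]; ring
  have hAp : ∀ ξ j, pd A j ξ = - ∫ x, Ψ x * pd w j (x - ξ) := by
    intro ξ j; rw [hA, cvk_pd hk hΨl, ← integral_neg]; unfold cvk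
    congr 1; funext y
    rw [hkdef, pd_reflect]; simp only [zero_sub, neg_sub]; ring
  have i1 : ∀ ξ, Integrable (fun x => Ψ x * w (x - ξ)) volume := fun ξ =>
    hΨ.integrable_mul ((hw.translate ξ).memLp 2)
  have i2 : ∀ ξ j, Integrable (fun x => Ψ x * pd w j (x - ξ)) volume := fun ξ j =>
    hΨ.integrable_mul (((hw.pd j).translate ξ).memLp 2)
  have hr : 0 ≤ r := (norm_nonneg _).trans hh
  have key := Convex.norm_image_sub_le_of_norm_fderiv_le' (𝕜 := ℝ) (f := A) (s := closedBall (0 : E3) r)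
    (φ := fderiv ℝ A 0) (C := 3 * nrm 2 Ψ * om) (x := 0) (y := h)
    (fun x _ => (hAd.differentiable (by norm_num)).differentiableAt) ?_ (convex_closedBall _ _)
    (by simpa using hr) (by simpa using hh)
  · rw [sub_zero] at key
    refine le_of_eq_of_le ?_ key
    rw [Real.norm_eq_abs, ← abs_neg]
    congr 1
    rw [clm_expand]
    change _ = A h - A 0 - ∑ j, h j * pd A j 0
    simp_rw [hAp, hAv, sub_zero]
    have e : ∀ x, Ψ x * (w x - w (x - h) - ∑ j, h j * pd w j x) =
      (Ψ x * w x - Ψ x * w (x - h)) - ∑ j, h j * (Ψ x * pd w j x) := by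
      intro x; rw [mul_sub, mul_sub, Finset.mul_sum]; congr 1
      exact Finset.sum_congr rfl fun j _ => by ring
    simp_rw [e]
    have i10 := i1 0
    have i20 := i2 0
    simp only [sub_zero] at i10 i20
    have iS : Integrable (fun x => Ψ x * w x - Ψ x * w (x - h)) volume := i10.sub (i1 h)
    have iT : Integrable (fun x => ∑ j, h j * (Ψ x * pd w j x)) volume :=
      integrable_finsetSum _ fun j _ => (i20 j).const_mul _
    rw [integral_sub iS iT,
      integral_sub i10 (i1 h), integral_finsetSum _ fun j _ => (i20 j).const_mul _]
    simp_rw [integral_const_mul]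
    simp only [mul_neg, Finset.sum_neg_distrib]
    ring
  · intro ξ hξ
    refine (clm_norm_le _).trans ?_
    have : ∀ j : Fin 3, |(fderiv ℝ A ξ - fderiv ℝ A 0) (EuclideanSpace.single j 1)| ≤ nrm 2 Ψ * om := by
      intro j
      change |pd A j ξ - pd A j 0| ≤ _
      have e : pd A j ξ - pd A j 0 = - ∫ x, Ψ x * (pd w j (x - ξ) - pd w j x) := by
        rw [hAp, hAp]
        have i20 := i2 0 j
        simp only [sub_zero] at i20 ⊢
        simp_rw [mul_sub]
        rw [integral_sub (i2 ξ j) i20]; ring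
      rw [e, abs_neg]
      refine (holder_abs hΨ ((((hw.pd j).translate ξ).memLp 2).sub ((hw.pd j).memLp 2))).trans ?_
      exact mul_le_mul_of_nonneg_left (hom ξ (by simpa using hξ) j) (nrm_nonneg _ _)
    refine (Finset.sum_le_sum fun j _ => this j).trans ?_
    simp; apply le_of_eq; ring

lemma int_prod {p q : ℝ} (hpq : p.HolderConjugate q) {f g k : E3 → ℝ} (hk : IsTest univ k)
    (hf : MemLp f (ENNReal.ofReal p) volume) (hg : MemLp g (ENNReal.ofReal q) volume) :
    Integrable (fun z : E3 × E3 => k z.2 * g (z.1 - z.2) * f z.1) (volume.prod volume) := by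
  have hf' := hf.integrable_norm_rpow (by simpa using hpq.pos) (by simp)
  have hg' := hg.integrable_norm_rpow (by simpa using hpq.symm.pos) (by simp)
  rw [ENNReal.toReal_ofReal hpq.nonneg] at hf'
  rw [ENNReal.toReal_ofReal hpq.symm.nonneg] at hg'
  have a1 := hk.integrable.abs.convolution_integrand (ContinuousLinearMap.lsmul ℝ ℝ) hg'
  have a2 := hf'.mul_prod hk.integrable.abs
  have hm : AEStronglyMeasurable (fun z : E3 × E3 => k z.2 * g (z.1 - z.2) * f z.1)
      (volume.prod volume) := by
    refine AEStronglyMeasurable.mul (AEStronglyMeasurable.mul ?_ ?_) ?_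
    · exact (hk.1.continuous.comp continuous_snd).aestronglyMeasurable
    · exact hg.1.comp_quasiMeasurePreserving (quasiMeasurePreserving_sub volume volume)
    · exact hf.1.comp_fst
  refine ((a1.div_const q).add (a2.div_const p)).mono' hm (Eventually.of_forall fun z => ?_)
  simp only [Pi.add_apply, ContinuousLinearMap.lsmul_apply, smul_eq_mul]
  have y := Real.young_inequality (|f z.1|) (|g (z.1 - z.2)|) hpq
  simp only [abs_abs] at y
  rw [Real.norm_eq_abs, abs_mul, abs_mul]
  have := mul_le_mul_of_nonneg_left y (abs_nonneg (k z.2))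
  simp only [Real.norm_eq_abs]
  refine le_trans (le_of_eq ?_) (this.trans (le_of_eq ?_)) <;> ring

lemma fub {p q : ℝ} (hpq : p.HolderConjugate q) {f g k : E3 → ℝ} (hk : IsTest univ k)
    (hf : MemLp f (ENNReal.ofReal p) volume) (hg : MemLp g (ENNReal.ofReal q) volume) :
    Integrable (fun h => k h * ∫ x, f x * g (x - h)) volume ∧
    Integrable (fun x => f x * cvk k g x) volume ∧
    ∫ x, f x * cvk k g x = ∫ h, k h * ∫ x, f x * g (x - h) := by
  have h2 := int_prod hpq hk hf hg
  have e : ∀ h, ∫ y, k h * g (y - h) * f y = k h * ∫ x, f x * g (x - h) := by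
    intro h
    rw [← integral_const_mul]
    congr 1; funext y; ring
  have e' : ∀ y, ∫ h, k h * g (y - h) * f y = f y * cvk k g y := by
    intro y
    rw [integral_mul_const, mul_comm]
    congr 1
    unfold cvk
    rw [← integral_sub_left_eq_self (fun h => k h * g (y - h)) volume y]
    congr 1; funext z; rw [sub_sub_cancel]
  refine ⟨h2.integral_prod_right.congr (Eventually.of_forall e),
    h2.integral_prod_left.congr (Eventually.of_forall e'), ?_⟩
  have hs := integral_integral_swap (f := fun y h => (k h * g (y - h)) * f y) h2
  simp_rw [e, e'] at hs
  exact hs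

lemma pd_coord (i j : Fin 3) (x : E3) : pd (fun y : E3 => y j) i x = if i = j then 1 else 0 := by
  unfold pd
  have : (fun y : E3 => y j) = fun y => EuclideanSpace.proj (𝕜 := ℝ) j y := rfl
  rw [this, ContinuousLinearMap.fderiv]
  simp [eq_comm]

lemma coord_contDiff (j : Fin 3) : ContDiff ℝ 1 (fun y : E3 => y j) :=
  (EuclideanSpace.proj (𝕜 := ℝ) j : E3 →L[ℝ] ℝ).contDiff

lemma kern_moment (n : ℕ) (i j : Fin 3) :
    ∫ h, pd (kern n) i h * h j = if i = j then -1 else 0 := by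
  have := ibp (kern_test n).one (kern_test n).2.1 (coord_contDiff j) i
  have e : ∫ h, pd (kern n) i h * h j = - ∫ h, kern n h * pd (fun y : E3 => y j) i h := by linarith
  rw [e]
  simp_rw [pd_coord]
  split_ifs
  · simp [kern_int]
  · simp

end Part6

section Part7
open scoped ENNReal NNReal ContDiff

lemma ht65 : ENNReal.HolderTriple (ENNReal.ofReal (6 / 5)) 6 1 := ⟨by
  have e6 : (6 : ℝ≥0∞) = ENNReal.ofReal 6 := by simp
  rw [e6, ← ENNReal.ofReal_inv_of_pos (by norm_num), ← ENNReal.ofReal_inv_of_pos (by norm_num),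
    ← ENNReal.ofReal_add (by positivity) (by positivity), inv_one, ← ENNReal.ofReal_one]
  congr 1; norm_num⟩

lemma ht3265 : ENNReal.HolderTriple (ENNReal.ofReal (3 / 2)) 6 (ENNReal.ofReal (6 / 5)) := ⟨by
  have e6 : (6 : ℝ≥0∞) = ENNReal.ofReal 6 := by simp
  rw [e6, ← ENNReal.ofReal_inv_of_pos (by norm_num), ← ENNReal.ofReal_inv_of_pos (by norm_num),
    ← ENNReal.ofReal_inv_of_pos (by norm_num), ← ENNReal.ofReal_add (by positivity) (by positivity)]
  congr 1; norm_num⟩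

lemma ht362 : ENNReal.HolderTriple 3 6 2 := ⟨by
  have e6 : (6 : ℝ≥0∞) = ENNReal.ofReal 6 := by simp
  have e3 : (3 : ℝ≥0∞) = ENNReal.ofReal 3 := by simp
  have e2 : (2 : ℝ≥0∞) = ENNReal.ofReal 2 := by simp
  rw [e6, e3, e2, ← ENNReal.ofReal_inv_of_pos (by norm_num), ← ENNReal.ofReal_inv_of_pos (by norm_num),
    ← ENNReal.ofReal_inv_of_pos (by norm_num), ← ENNReal.ofReal_add (by positivity) (by positivity)]
  congr 1; norm_num⟩

lemma memLp_sub_shift {p : ℝ≥0∞} {f : E3 → ℝ} (hf : MemLp f p volume) (h : E3) :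
    MemLp (fun x => f (x - h)) p volume :=
  hf.comp_measurePreserving (measurePreserving_sub_right volume h)

lemma nrm_shift {p : ℝ≥0∞} {f : E3 → ℝ} (hf : MemLp f p volume) (h : E3) :
    nrm p (fun x => f (x - h)) = nrm p f := by
  have := nrm_translate p hf.1 (-h)
  simpa [sub_eq_add_neg] using this

lemma LpT.shift {p : ℝ≥0∞} {fn : ℕ → E3 → ℝ} {f : E3 → ℝ} (h : LpT p fn f) (z : E3) :
    LpT p (fun n x => fn n (x - z)) (fun x => f (x - z)) := by
  refine ⟨fun n => memLp_sub_shift (h.1 n) z, memLp_sub_shift h.2.1 z, ?_⟩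
  refine h.2.2.congr fun n => ?_
  exact (eLpNorm_comp_measurePreserving ((h.1 n).sub h.2.1).1 (measurePreserving_sub_right volume z)).symm

lemma LpT.nrm0 {p : ℝ≥0∞} {fn : ℕ → E3 → ℝ} {f : E3 → ℝ} (h : LpT p fn f) :
    Tendsto (fun n => nrm p (fun x => fn n x - f x)) atTop (𝓝 0) := by
  have := (ENNReal.tendsto_toReal (ENNReal.zero_ne_top)).comp h.2.2
  simpa [nrm, Function.comp_def] using this

lemma trans_ev {p : ℝ≥0∞} [Fact (1 ≤ p)] (hp : p ≠ ⊤) {f : E3 → ℝ} (hf : MemLp f p volume)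
    {ε : ℝ} (hε : 0 < ε) : ∀ᶠ n : ℕ in atTop, ∀ h : E3, ‖h‖ ≤ 2 / ((n : ℝ) + 1) →
      nrm p (fun x => f (x - h) - f x) ≤ ε := by
  obtain ⟨r, hr, h⟩ := trans_cont hp hf hε
  filter_upwards [rOut_tendsto.eventually (gt_mem_nhds hr)] with n hn z hz
  exact h z (hz.trans hn.le)

lemma pd_kern_zero {n : ℕ} {i : Fin 3} {h : E3} (hh : 2 / ((n : ℝ) + 1) < ‖h‖) : pd (kern n) i h = 0 := by
  have hn : h ∉ tsupport (kern n) := by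
    rw [kern_supp]; simpa using hh
  have : fderiv ℝ (kern n) h = 0 := by
    by_contra hc
    exact hn (support_fderiv_subset ℝ (Function.mem_support.2 hc))
  unfold pd
  rw [this]; rfl

section
variable {μ η γ : ℝ} {dG : E3 → Fin 3 → ℝ} {ρ : E3 → ℝ} {u : E3 → Fin 3 → ℝ}
    {du : E3 → Fin 3 → Fin 3 → ℝ} {Gn : ℕ → E3 → ℝ} {un : ℕ → E3 → Fin 3 → ℝ}

lemma Dat.taylor_u (D : Dat μ η γ dG ρ u du Gn un) (i : Fin 3) {Ψ : E3 → ℝ} (hΨ : MemLp Ψ 2 volume)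
    (hΨ' : MemLp Ψ (ENNReal.ofReal (6 / 5)) volume) {r om : ℝ}
    (hom : ∀ ξ : E3, ‖ξ‖ ≤ r → ∀ j, nrm 2 (fun x => du (x - ξ) i j - du x i j) ≤ om)
    {h : E3} (hh : ‖h‖ ≤ r) :
    |∫ x, Ψ x * (u x i - u (x - h) i - ∑ j, h j * du x i j)| ≤ 3 * nrm 2 Ψ * om * ‖h‖ := by
  have := ht65
  haveI : Fact ((1 : ℝ≥0∞) ≤ ENNReal.ofReal (6 / 5)) := ⟨by
    rw [← ENNReal.ofReal_one]; exact ENNReal.ofReal_le_ofReal (by norm_num)⟩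
  haveI : Fact ((1 : ℝ≥0∞) ≤ 6) := ⟨by norm_num⟩
  set ε : ℕ → ℝ := fun m => ∑ j, 2 * nrm 2 (fun x => pd (fun y => un m y i) j x - du x i j) with hε
  have hε0 : Tendsto ε atTop (𝓝 0) := by
    have : Tendsto ε atTop (𝓝 (∑ j : Fin 3, 2 * 0)) :=
      tendsto_finsetSum _ fun j _ => (D.duL i j).nrm0.const_mul 2
    simpa using this
  have hm : ∀ m, |∫ x, Ψ x * (un m x i - un m (x - h) i - ∑ j, h j * pd (fun y => un m y i) j x)|
      ≤ 3 * nrm 2 Ψ * (om + ε m) * ‖h‖ := by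
    intro m
    refine taylor_test (D.unT m i) hΨ (fun ξ hξ j => ?_) hh
    set w := fun x => pd (fun y => un m y i) j x
    set d := fun x => du x i j
    have hw : MemLp w 2 volume := (D.duL i j).1 m
    have hd : MemLp d 2 volume := (D.duL i j).2.1
    have hwd : MemLp (fun x => w x - d x) 2 volume := hw.sub hd
    have hwds := memLp_sub_shift hwd ξ
    have hds : MemLp (fun x => d (x - ξ) - d x) 2 volume := (memLp_sub_shift hd ξ).sub hd
    have e : (fun x => w (x - ξ) - w x) =
      fun x => (d (x - ξ) - d x) + ((w (x - ξ) - d (x - ξ)) - (w x - d x)) := by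
      funext x; ring
    change nrm 2 (fun x => w (x - ξ) - w x) ≤ _
    rw [e]
    refine (nrm_add_le (by norm_num) hds (hwds.sub hwd)).trans ?_
    have a1 := nrm_sub_le (p := 2) (by norm_num) hwds hwd
    rw [nrm_shift hwd] at a1
    have a2 : 2 * nrm 2 (fun x => w x - d x) ≤ ε m :=
      Finset.single_le_sum (f := fun j => 2 * nrm 2 (fun x => pd (fun y => un m y i) j x - du x i j))
        (fun j _ => mul_nonneg (by norm_num) (nrm_nonneg _ _)) (Finset.mem_univ j)
    have a3 := hom ξ hξ j
    have a4 : nrm 2 ((fun x => w (x - ξ) - d (x - ξ)) - fun x => w x - d x) =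
      nrm 2 (fun x => (w (x - ξ) - d (x - ξ)) - (w x - d x)) := rfl
    rw [a4]
    linarith
  have t1 : LpT 1 _ _ := (LpT.const hΨ').mul ((D.uL i).add (((D.uL i).shift h).const_mul (-1)))
  have t2 : LpT 1 _ _ := (LpT.const hΨ).mul ((((D.duL i 0).const_mul (h 0)).add
    ((D.duL i 1).const_mul (h 1))).add ((D.duL i 2).const_mul (h 2)))
  have t3 := (t1.add (t2.const_mul (-1))).integral
  have t4 : Tendsto (fun m => ∫ x, Ψ x * (un m x i - un m (x - h) i - ∑ j, h j * pd (fun y => un m y i) j x))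
      atTop (𝓝 (∫ x, Ψ x * (u x i - u (x - h) i - ∑ j, h j * du x i j))) := by
    convert t3 using 1
    · funext m; congr 1; funext x; simp only [Fin.sum_univ_three]; ring
    · congr 2; funext x; simp only [Fin.sum_univ_three]; ring
  have t5 : Tendsto (fun m => 3 * nrm 2 Ψ * (om + ε m) * ‖h‖) atTop (𝓝 (3 * nrm 2 Ψ * (om + 0) * ‖h‖)) :=
    ((tendsto_const_nhds.add hε0).const_mul _).mul_const _
  rw [add_zero] at t5
  exact le_of_tendsto_of_tendsto' t4.abs t5 hm

lemma coord_le_norm (h : E3) (j : Fin 3) : |h j| ≤ ‖h‖ := by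
  have := PiLp.norm_apply_le h j
  simpa using this

lemma Dat.J_est (D : Dat μ η γ dG ρ u du Gn un) (i : Fin 3) {F : E3 → ℝ} (hF : Continuous F)
    (hFc : HasCompactSupport F) {r om : ℝ}
    (hom : ∀ ξ : E3, ‖ξ‖ ≤ r → ∀ j, nrm 2 (fun x => du (x - ξ) i j - du x i j) ≤ om)
    (hom' : ∀ ξ : E3, ‖ξ‖ ≤ r → nrm 6 (fun x => ρ (x - ξ) - ρ x) ≤ om)
    {h : E3} (hh : ‖h‖ ≤ r) :
    |(∫ x, F x * u x i * ρ (x - h)) - (∫ x, F x * (ρ (x - h) * u (x - h) i))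
      - ∑ j, h j * ∫ x, F x * ρ x * du x i j| ≤
      nrm 3 F * (3 * nrm 6 ρ + ∑ j, nrm 2 (fun x => du x i j)) * om * ‖h‖ := by
  have := ht65
  have := ht3265
  have := ht362
  have hFL : ∀ p, MemLp F p volume := fun p => hF.memLp_of_hasCompactSupport hFc
  have hρ := D.ρ6
  have hρs := memLp_sub_shift hρ h
  have hΨ2 : MemLp (fun x => F x * ρ (x - h)) 2 volume := hρs.mul (hFL 3)
  have hΨ6 : MemLp (fun x => F x * ρ (x - h)) (ENNReal.ofReal (6 / 5)) volume :=
    hρs.mul (hFL (ENNReal.ofReal (3 / 2)))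
  have hu := (D.uL i).2.1
  have hus := memLp_sub_shift hu h
  have hd : ∀ j, MemLp (fun x => du x i j) 2 volume := fun j => (D.duL i j).2.1
  have hΨρ : MemLp (fun x => F x * ρ x) 2 volume := hρ.mul (hFL 3)
  have i1 : Integrable (fun x => (F x * ρ (x - h)) * u x i) volume :=
    memLp_one_iff_integrable.1 (hu.mul hΨ6)
  have i2 : Integrable (fun x => (F x * ρ (x - h)) * u (x - h) i) volume :=
    memLp_one_iff_integrable.1 (hus.mul hΨ6)
  have i3 : ∀ j, Integrable (fun x => (F x * ρ (x - h)) * du x i j) volume := fun j =>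
    hΨ2.integrable_mul (hd j)
  have i4 : ∀ j, Integrable (fun x => (F x * ρ x) * du x i j) volume := fun j =>
    hΨρ.integrable_mul (hd j)
  have T := D.taylor_u i hΨ2 hΨ6 hom hh
  have hn2 : nrm 2 (fun x => F x * ρ (x - h)) ≤ nrm 3 F * nrm 6 ρ := by
    have := nrm_mul_le (r := 2) (hFL 3) hρs
    rwa [nrm_shift hρ] at this
  have eT : ∫ x, F x * ρ (x - h) * (u x i - u (x - h) i - ∑ j, h j * du x i j) =
      (∫ x, F x * u x i * ρ (x - h)) - (∫ x, F x * (ρ (x - h) * u (x - h) i))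
       - ∑ j, h j * ∫ x, F x * ρ (x - h) * du x i j := by
    have iS : Integrable (fun x => F x * ρ (x - h) * u x i - F x * ρ (x - h) * u (x - h) i) volume :=
      i1.sub i2
    have iT : Integrable (fun x => ∑ j, h j * (F x * ρ (x - h) * du x i j)) volume :=
      integrable_finsetSum _ fun j _ => (i3 j).const_mul _
    have e : ∀ x, F x * ρ (x - h) * (u x i - u (x - h) i - ∑ j, h j * du x i j) =
      (F x * ρ (x - h) * u x i - F x * ρ (x - h) * u (x - h) i)
        - ∑ j, h j * (F x * ρ (x - h) * du x i j) := by
      intro x; rw [mul_sub, mul_sub, Finset.mul_sum]; congr 1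
      exact Finset.sum_congr rfl fun j _ => by ring
    simp_rw [e]
    rw [integral_sub iS iT, integral_sub i1 i2, integral_finsetSum _ fun j _ => (i3 j).const_mul _]
    simp_rw [integral_const_mul]
    congr 2
    · congr 1; funext x; ring
    · congr 1; funext x; ring
  have om0 : 0 ≤ om := (nrm_nonneg _ _).trans (hom' h hh)
  have dj : ∀ j, |(∫ x, F x * ρ (x - h) * du x i j) - ∫ x, F x * ρ x * du x i j| ≤
      nrm 3 F * om * nrm 2 (fun x => du x i j) := by
    intro j
    rw [← integral_sub (i3 j) (i4 j)]
    have e : ∀ x, F x * ρ (x - h) * du x i j - F x * ρ x * du x i j =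
      (F x * (ρ (x - h) - ρ x)) * du x i j := fun x => by ring
    simp_rw [e]
    have hm : MemLp (fun x => F x * (ρ (x - h) - ρ x)) 2 volume := (hρs.sub hρ).mul (hFL 3)
    refine (holder_abs hm (hd j)).trans ?_
    refine mul_le_mul_of_nonneg_right ?_ (nrm_nonneg _ _)
    refine (nrm_mul_le (hFL 3) (hρs.sub hρ)).trans ?_
    exact mul_le_mul_of_nonneg_left (hom' h hh) (nrm_nonneg _ _)
  have eJ : (∫ x, F x * u x i * ρ (x - h)) - (∫ x, F x * (ρ (x - h) * u (x - h) i))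
      - ∑ j, h j * ∫ x, F x * ρ x * du x i j =
      (∫ x, F x * ρ (x - h) * (u x i - u (x - h) i - ∑ j, h j * du x i j)) +
      ∑ j, h j * ((∫ x, F x * ρ (x - h) * du x i j) - ∫ x, F x * ρ x * du x i j) := by
    rw [eT]
    simp_rw [mul_sub, Finset.sum_sub_distrib]
    ring
  rw [eJ]
  refine (abs_add_le _ _).trans ?_
  have b2 : |∑ j, h j * ((∫ x, F x * ρ (x - h) * du x i j) - ∫ x, F x * ρ x * du x i j)| ≤
      ∑ j, ‖h‖ * (nrm 3 F * om * nrm 2 (fun x => du x i j)) := by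
    refine (Finset.abs_sum_le_sum_abs _ _).trans (Finset.sum_le_sum fun j _ => ?_)
    rw [abs_mul]
    exact mul_le_mul (coord_le_norm h j) (dj j) (abs_nonneg _) (norm_nonneg _)
  have b1 : 3 * nrm 2 (fun x => F x * ρ (x - h)) * om * ‖h‖ ≤ 3 * (nrm 3 F * nrm 6 ρ) * om * ‖h‖ := by
    gcongr
  refine (add_le_add (T.trans b1) b2).trans (le_of_eq ?_)
  simp_rw [← Finset.mul_sum]
  ring
end

end Part7

section Part8
open scoped ENNReal NNReal ContDiff

section
variable {μ η γ : ℝ} {dG : E3 → Fin 3 → ℝ} {ρ : E3 → ℝ} {u : E3 → Fin 3 → ℝ}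
    {du : E3 → Fin 3 → Fin 3 → ℝ} {Gn : ℕ → E3 → ℝ} {un : ℕ → E3 → Fin 3 → ℝ}

lemma hc65 : (6 / 5 : ℝ).HolderConjugate 6 := by
  rw [Real.holderConjugate_iff]; norm_num

lemma hc32 : (3 / 2 : ℝ).HolderConjugate 3 := by
  rw [Real.holderConjugate_iff]; norm_num

lemma Dat.ρu3 (D : Dat μ η γ dG ρ u du Gn un) (i : Fin 3) : MemLp (fun x => ρ x * u x i) 3 volume :=
  (D.uL i).2.1.mul D.ρ6

lemma Dat.mass_cvk (D : Dat μ η γ dG ρ u du Gn un) (n : ℕ) (x : E3) :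
    ∑ i, cvk (pd (kern n) i) (fun y => ρ y * u y i) x = 0 := by
  have hl : ∀ i, LocallyIntegrable (fun y => ρ y * u y i) volume := fun i =>
    (D.ρu3 i).locallyIntegrable (by norm_num)
  have hm := D.mass _ ((kern_test n).reflect x)
  simp_rw [pd_reflect] at hm
  have hi : ∀ i, Integrable (fun y => pd (kern n) i (x - y) * (ρ y * u y i)) volume := fun i =>
    cvk_int_aux ((kern_test n).pd i) (hl i) x
  unfold cvk
  rw [← integral_finsetSum _ fun i _ => hi i, ← neg_eq_zero, ← integral_neg, ← hm]
  congr 1; funext y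
  rw [Finset.mul_sum, ← Finset.sum_neg_distrib]
  exact Finset.sum_congr rfl fun i _ => by ring

lemma Dat.comm_est (D : Dat μ η γ dG ρ u du Gn un) {C : ℝ}
    (hC : ∀ n i, ∫ h, ‖h‖ * |pd (kern n) i h| ≤ C) (n : ℕ) {F : E3 → ℝ} (hF : Continuous F)
    (hFc : HasCompactSupport F) {om : ℝ}
    (hom : ∀ ξ : E3, ‖ξ‖ ≤ 2 / ((n : ℝ) + 1) → ∀ i j, nrm 2 (fun x => du (x - ξ) i j - du x i j) ≤ om)
    (hom' : ∀ ξ : E3, ‖ξ‖ ≤ 2 / ((n : ℝ) + 1) → nrm 6 (fun x => ρ (x - ξ) - ρ x) ≤ om) :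
    |(∑ i, ∫ x, F x * u x i * cvk (pd (kern n) i) ρ x) + ∑ i, ∫ x, F x * ρ x * du x i i| ≤
      ∑ i, nrm 3 F * (3 * nrm 6 ρ + ∑ j, nrm 2 (fun x => du x i j)) * om * C := by
  have := ht3265
  have hFL : ∀ p, MemLp F p volume := fun p => hF.memLp_of_hasCompactSupport hFc
  have hρ := D.ρ6
  have e6 : (6 : ℝ≥0∞) = ENNReal.ofReal 6 := by simp
  have e3 : (3 : ℝ≥0∞) = ENNReal.ofReal 3 := by simp
  have f1 := fun i => fub hc65 (f := fun x => F x * u x i) (g := ρ) ((kern_test n).pd i)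
    ((D.uL i).2.1.mul (hFL (ENNReal.ofReal (3 / 2)))) (by rw [← e6]; exact hρ)
  have f2 := fun i => fub hc32 (f := F) (g := fun x => ρ x * u x i) ((kern_test n).pd i)
    (hFL _) (by rw [← e3]; exact D.ρu3 i)
  have z : ∑ i, ∫ x, F x * cvk (pd (kern n) i) (fun y => ρ y * u y i) x = 0 := by
    rw [← integral_finsetSum _ fun i _ => (f2 i).2.1]
    simp_rw [← Finset.mul_sum, D.mass_cvk]
    simp
  set K : Fin 3 → Fin 3 → ℝ := fun i j => ∫ x, F x * ρ x * du x i j with hK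
  have ic : ∀ i j, Integrable (fun h : E3 => pd (kern n) i h * h j) volume := by
    intro i j
    exact Continuous.integrable_of_hasCompactSupport
      (((kern_test n).pd i).1.continuous.mul (coord_contDiff j).continuous)
      (((kern_test n).pd i).2.1.mul_right)
  have iK : ∀ i, Integrable (fun h : E3 => ∑ j, K i j * (pd (kern n) i h * h j)) volume := fun i =>
    integrable_finsetSum _ fun j _ => (ic i j).const_mul _
  have ipt : ∀ i, Integrable (fun h => pd (kern n) i h * (∫ x, F x * u x i * ρ (x - h))
      - pd (kern n) i h * ∫ x, F x * (ρ (x - h) * u (x - h) i)) volume := fun i => (f1 i).1.sub (f2 i).1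
  have per : ∀ i, (∫ x, F x * u x i * cvk (pd (kern n) i) ρ x)
      - (∫ x, F x * cvk (pd (kern n) i) (fun y => ρ y * u y i) x) + K i i =
      ∫ h, pd (kern n) i h * ((∫ x, F x * u x i * ρ (x - h)) - (∫ x, F x * (ρ (x - h) * u (x - h) i))
      - ∑ j, h j * K i j) := by
    intro i
    have e : ∀ h : E3, pd (kern n) i h * ((∫ x, F x * u x i * ρ (x - h))
        - (∫ x, F x * (ρ (x - h) * u (x - h) i)) - ∑ j, h j * K i j) =
      (pd (kern n) i h * (∫ x, F x * u x i * ρ (x - h))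
      - pd (kern n) i h * ∫ x, F x * (ρ (x - h) * u (x - h) i)) -
      ∑ j, K i j * (pd (kern n) i h * h j) := by
      intro h
      rw [mul_sub, mul_sub, Finset.mul_sum]
      congr 1
      exact Finset.sum_congr rfl fun j _ => by ring
    simp_rw [e]
    rw [integral_sub (ipt i) (iK i), integral_sub (f1 i).1 (f2 i).1, ← (f1 i).2.2, ← (f2 i).2.2,
      integral_finsetSum _ fun j _ => (ic i j).const_mul _]
    simp_rw [integral_const_mul, kern_moment]
    simp
  have bd : ∀ i, |(∫ x, F x * u x i * cvk (pd (kern n) i) ρ x)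
      - (∫ x, F x * cvk (pd (kern n) i) (fun y => ρ y * u y i) x) + K i i| ≤
      nrm 3 F * (3 * nrm 6 ρ + ∑ j, nrm 2 (fun x => du x i j)) * om * C := by
    intro i
    rw [per i]
    set A := nrm 3 F * (3 * nrm 6 ρ + ∑ j, nrm 2 (fun x => du x i j)) * om with hA
    have om0 : 0 ≤ om := (nrm_nonneg _ _).trans (hom' 0 (by simp; positivity))
    have hA0 : 0 ≤ A := by
      have a1 := nrm_nonneg 3 F
      have a2 := nrm_nonneg 6 ρ
      have a3 : 0 ≤ ∑ j, nrm 2 (fun x => du x i j) := Finset.sum_nonneg fun j _ => nrm_nonneg _ _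
      positivity
    have ig : Integrable (fun h : E3 => A * (‖h‖ * |pd (kern n) i h|)) volume := by
      refine Integrable.const_mul ?_ _
      exact Continuous.integrable_of_hasCompactSupport
        (continuous_norm.mul ((kern_test n).pd i).1.continuous.abs)
        (HasCompactSupport.mul_left (((kern_test n).pd i).2.1.abs))
    rw [← Real.norm_eq_abs]
    refine (norm_integral_le_of_norm_le ig (Eventually.of_forall fun h => ?_)).trans ?_
    · rw [Real.norm_eq_abs, abs_mul]
      rcases le_or_gt ‖h‖ (2 / ((n : ℝ) + 1)) with hh | hh
      · have := D.J_est i hF hFc (fun ξ hξ j => hom ξ hξ i j) hom' hh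
        refine (mul_le_mul_of_nonneg_left this (abs_nonneg _)).trans (le_of_eq ?_)
        rw [hA]; ring
      · rw [pd_kern_zero hh]; simp
    · rw [integral_const_mul]
      exact mul_le_mul_of_nonneg_left (hC n i) hA0
  have eq : (∑ i, ∫ x, F x * u x i * cvk (pd (kern n) i) ρ x) + ∑ i, ∫ x, F x * ρ x * du x i i =
      ∑ i, ((∫ x, F x * u x i * cvk (pd (kern n) i) ρ x)
      - (∫ x, F x * cvk (pd (kern n) i) (fun y => ρ y * u y i) x) + K i i) := by
    rw [Finset.sum_add_distrib, Finset.sum_sub_distrib, z, sub_zero]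
  rw [eq]
  exact (Finset.abs_sum_le_sum_abs _ _).trans (Finset.sum_le_sum fun i _ => bd i)

lemma Dat.comm (D : Dat μ η γ dG ρ u du Gn un) {F : ℕ → E3 → ℝ} (hF : ∀ n, Continuous (F n))
    (hFc : ∀ n, HasCompactSupport (F n)) {B : ℝ} (hB : ∀ n, nrm 3 (F n) ≤ B) :
    Tendsto (fun n => (∑ i, ∫ x, F n x * u x i * cvk (pd (kern n) i) ρ x) +
      ∑ i, ∫ x, F n x * ρ x * du x i i) atTop (𝓝 0) := by
  have : Fact ((1 : ℝ≥0∞) ≤ 6) := ⟨by norm_num⟩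
  obtain ⟨C, hC0, hC⟩ := kern_grad
  have hB0 : 0 ≤ B := (nrm_nonneg _ _).trans (hB 0)
  set S := ∑ i, B * (3 * nrm 6 ρ + ∑ j, nrm 2 (fun x => du x i j)) * C with hS
  have hpos : ∀ i, 0 ≤ 3 * nrm 6 ρ + ∑ j, nrm 2 (fun x => du x i j) := fun i => by
    have a2 := nrm_nonneg 6 ρ
    have a3 : 0 ≤ ∑ j, nrm 2 (fun x => du x i j) := Finset.sum_nonneg fun j _ => nrm_nonneg _ _
    positivity
  have hS0 : 0 ≤ S := Finset.sum_nonneg fun i _ => by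
    have := hpos i
    positivity
  rw [Metric.tendsto_nhds]
  intro ε hε
  set om := ε / (S + 1) / 2 with hom
  have om0 : 0 < om := by positivity
  have ev1 := trans_ev (p := 6) (by norm_num) D.ρ6 om0
  have ev2 : ∀ᶠ n : ℕ in atTop, ∀ i j, ∀ h : E3, ‖h‖ ≤ 2 / ((n : ℝ) + 1) →
      nrm 2 (fun x => du (x - h) i j - du x i j) ≤ om := by
    rw [eventually_all]; intro i; rw [eventually_all]; intro j
    exact trans_ev (by norm_num) (D.duL i j).2.1 om0
  filter_upwards [ev1, ev2] with n h1 h2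
  rw [dist_zero_right, Real.norm_eq_abs]
  refine (D.comm_est hC n (hF n) (hFc n) (fun ξ hξ i j => h2 i j ξ hξ) h1).trans_lt ?_
  have : ∑ i, nrm 3 (F n) * (3 * nrm 6 ρ + ∑ j, nrm 2 (fun x => du x i j)) * om * C ≤ S * om := by
    rw [hS, Finset.sum_mul]
    refine Finset.sum_le_sum fun i _ => ?_
    have a := mul_le_mul_of_nonneg_right (hB n) (hpos i)
    have b := mul_le_mul_of_nonneg_right a (mul_nonneg om0.le hC0)
    linarith
  refine this.trans_lt ?_
  rw [hom, mul_div_assoc', mul_div_assoc', div_div, div_lt_iff₀ (by positivity)]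
  nlinarith
end

end Part8

section Part9
open scoped ENNReal NNReal ContDiff

section
variable {μ η γ : ℝ} {dG : E3 → Fin 3 → ℝ} {ρ : E3 → ℝ} {u : E3 → Fin 3 → ℝ}
    {du : E3 → Fin 3 → Fin 3 → ℝ} {Gn : ℕ → E3 → ℝ} {un : ℕ → E3 → Fin 3 → ℝ}

lemma Dat.weak_grad (D : Dat μ η γ dG ρ u du Gn un) (i j : Fin 3) {Φ : E3 → ℝ} (hΦ : ContDiff ℝ 1 Φ)
    (hc : HasCompactSupport Φ) : ∫ x, pd Φ j x * u x i = - ∫ x, Φ x * du x i j := by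
  have := ht65
  have : Fact ((1 : ℝ≥0∞) ≤ ENNReal.ofReal (6 / 5)) := ⟨by
    rw [← ENNReal.ofReal_one]; exact ENNReal.ofReal_le_ofReal (by norm_num)⟩
  have h0 : (0 : WithTop ℕ∞) + 1 ≤ 1 := by norm_num
  have m1 : MemLp Φ 2 volume := hΦ.continuous.memLp_of_hasCompactSupport hc
  have m2 : MemLp (pd Φ j) (ENNReal.ofReal (6 / 5)) volume :=
    (pd_contDiff hΦ h0 j).continuous.memLp_of_hasCompactSupport (pd_compact hc j)
  have t1 : LpT 1 _ _ := (LpT.const m2).mul (D.uL i)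
  have t2 : LpT 1 _ _ := (LpT.const m1).mul (D.duL i j)
  refine tendsto_nhds_unique t1.integral (t2.integral.neg.congr fun n => ?_)
  have := ibp hΦ hc (D.unT n i).one j
  linarith

lemma dct_b {ρ g : E3 → ℝ} (hρ : LocallyIntegrable ρ volume) (hg : Integrable g volume)
    {b : ℝ → ℝ} (hb : Continuous b) {M : ℝ} (hM : ∀ s, |b s| ≤ M) :
    Tendsto (fun n => ∫ x, g x * b (cvk (kern n) ρ x)) atTop (𝓝 (∫ x, g x * b (ρ x))) := by
  refine tendsto_integral_of_dominated_convergence (fun x => |g x| * M) ?_ (hg.abs.mul_const M) ?_ ?_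
  · intro n
    exact hg.1.mul (hb.comp (cvk_contDiff (kern_test n) hρ).continuous).aestronglyMeasurable
  · intro n
    refine Eventually.of_forall fun x => ?_
    rw [Real.norm_eq_abs, abs_mul]
    exact mul_le_mul_of_nonneg_left (hM _) (abs_nonneg _)
  · filter_upwards [kern_ae hρ] with x hx
    exact ((hb.tendsto _).comp hx).const_mul _

lemma pd_comp {b : ℝ → ℝ} {f : E3 → ℝ} (hb : Differentiable ℝ b) (hf : Differentiable ℝ f) (i : Fin 3)
    (x : E3) : pd (fun y => b (f y)) i x = deriv b (f x) * pd f i x := by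
  unfold pd
  have h := (hb (f x)).hasDerivAt.comp_hasFDerivAt x (hf x).hasFDerivAt
  have e : (fun y => b (f y)) = b ∘ f := rfl
  rw [e, h.fderiv]
  simp

lemma Dat.renorm (D : Dat μ η γ dG ρ u du Gn un) {b : ℝ → ℝ} (hb : ContDiff ℝ 1 b) {M : ℝ}
    (hM : ∀ s, |b s| ≤ M) (hM' : ∀ s, |deriv b s| ≤ M) {ζ : E3 → ℝ} (hζ : IsTest univ ζ) :
    (∑ i, ∫ x, (ζ x * ρ x * du x i i) * deriv b (ρ x)) - (∑ i, ∫ x, (ζ x * du x i i) * b (ρ x))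
      = ∑ i, ∫ x, (pd ζ i x * u x i) * b (ρ x) := by
  have := ht65
  have := ht362
  have hρ := D.ρ6
  have hρl : LocallyIntegrable ρ volume := hρ.locallyIntegrable (by norm_num)
  have hR : ∀ n, ContDiff ℝ ∞ (cvk (kern n) ρ) := fun n => cvk_contDiff (kern_test n) hρl
  have hR1 : ∀ n, ContDiff ℝ 1 (cvk (kern n) ρ) := fun n => (hR n).of_le (by exact_mod_cast le_top)
  have hb' : Continuous (deriv b) := hb.continuous_deriv (by norm_num)
  have hbd : Differentiable ℝ b := hb.differentiable (by norm_num)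
  have i1 : ∀ i, Integrable (fun x => ζ x * ρ x * du x i i) volume := fun i =>
    (show MemLp (fun x => ζ x * ρ x) 2 volume from hρ.mul (hζ.memLp 3)).integrable_mul (D.duL i i).2.1
  have i2 : ∀ i, Integrable (fun x => ζ x * du x i i) volume := fun i =>
    (hζ.memLp 2).integrable_mul (D.duL i i).2.1
  have i3 : ∀ i, Integrable (fun x => pd ζ i x * u x i) volume := fun i =>
    memLp_one_iff_integrable.1 ((D.uL i).2.1.mul ((hζ.pd i).memLp (ENNReal.ofReal (6 / 5))))
  have M0 : 0 ≤ M := (abs_nonneg _).trans (hM 0)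
  have c := D.comm (F := fun n x => ζ x * deriv b (cvk (kern n) ρ x)) (B := nrm 3 (fun x => M * |ζ x|))
    (fun n => hζ.1.continuous.mul (hb'.comp (hR n).continuous)) (fun n => hζ.2.1.mul_right) (fun n => by
      unfold nrm
      refine ENNReal.toReal_mono ((hζ.memLp 3).abs.const_mul M).2.ne ?_
      refine eLpNorm_mono_real fun x => ?_
      rw [Real.norm_eq_abs, abs_mul, mul_comm]
      exact mul_le_mul_of_nonneg_right (hM' _) (abs_nonneg _))
  have key : ∀ n, (∑ i, ∫ x, ζ x * deriv b (cvk (kern n) ρ x) * u x i * cvk (pd (kern n) i) ρ x) +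
      ∑ i, ∫ x, ζ x * deriv b (cvk (kern n) ρ x) * ρ x * du x i i =
      ((∑ i, ∫ x, (ζ x * ρ x * du x i i) * deriv b (cvk (kern n) ρ x))
        - (∑ i, ∫ x, (ζ x * du x i i) * b (cvk (kern n) ρ x)))
      - ∑ i, ∫ x, (pd ζ i x * u x i) * b (cvk (kern n) ρ x) := by
    intro n
    have w : ∀ i, (∫ x, ζ x * deriv b (cvk (kern n) ρ x) * u x i * cvk (pd (kern n) i) ρ x) =
        - (∫ x, (ζ x * du x i i) * b (cvk (kern n) ρ x)) -
          ∫ x, (pd ζ i x * u x i) * b (cvk (kern n) ρ x) := by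
      intro i
      have hbR : ContDiff ℝ 1 (fun x => b (cvk (kern n) ρ x)) := hb.comp (hR1 n)
      have wg := D.weak_grad i i (hζ.one.mul hbR) hζ.2.1.mul_right
      have hp : ∀ x, pd (fun x => ζ x * b (cvk (kern n) ρ x)) i x =
          ζ x * (deriv b (cvk (kern n) ρ x) * cvk (pd (kern n) i) ρ x) +
            pd ζ i x * b (cvk (kern n) ρ x) := by
        intro x
        rw [pd_mul hζ.differentiable (hbR.differentiable (by norm_num)),
          pd_comp hbd ((hR1 n).differentiable (by norm_num)), cvk_pd (kern_test n) hρl]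
      have wg' : ∫ x, pd (fun x => ζ x * b (cvk (kern n) ρ x)) i x * u x i =
        - ∫ x, (ζ x * b (cvk (kern n) ρ x)) * du x i i := wg
      simp_rw [hp] at wg'
      have j1 : Integrable (fun x => ζ x * deriv b (cvk (kern n) ρ x) * u x i * cvk (pd (kern n) i) ρ x)
          volume := by
        have hT : MemLp (fun x => ζ x * deriv b (cvk (kern n) ρ x) * cvk (pd (kern n) i) ρ x)
            (ENNReal.ofReal (6 / 5)) volume := by
          refine Continuous.memLp_of_hasCompactSupport ?_ ?_
          · exact (hζ.1.continuous.mul (hb'.comp (hR n).continuous)).mul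
              (cvk_contDiff ((kern_test n).pd i) hρl).continuous
          · exact (hζ.2.1.mul_right).mul_right
        refine (memLp_one_iff_integrable.1 ((D.uL i).2.1.mul hT)).congr (Eventually.of_forall fun x => ?_)
        simp only [Pi.mul_apply]; ring
      have j2 : Integrable (fun x => (pd ζ i x * u x i) * b (cvk (kern n) ρ x)) volume :=
        (i3 i).mul_bdd (hb.continuous.comp (hR n).continuous).aestronglyMeasurable
          (Eventually.of_forall fun x => hM _)
      have s1 : ∫ x, (ζ x * (deriv b (cvk (kern n) ρ x) * cvk (pd (kern n) i) ρ x) +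
            pd ζ i x * b (cvk (kern n) ρ x)) * u x i =
          (∫ x, ζ x * deriv b (cvk (kern n) ρ x) * u x i * cvk (pd (kern n) i) ρ x) +
          ∫ x, (pd ζ i x * u x i) * b (cvk (kern n) ρ x) := by
        rw [← integral_add j1 j2]
        congr 1; funext x; ring
      have s2 : ∫ x, (ζ x * b (cvk (kern n) ρ x)) * du x i i =
          ∫ x, (ζ x * du x i i) * b (cvk (kern n) ρ x) := by
        congr 1; funext x; ring
      rw [s1, s2] at wg'
      linarith
    simp_rw [w]
    rw [Finset.sum_sub_distrib, Finset.sum_neg_distrib]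
    have e : ∀ i, ∫ x, ζ x * deriv b (cvk (kern n) ρ x) * ρ x * du x i i =
      ∫ x, (ζ x * ρ x * du x i i) * deriv b (cvk (kern n) ρ x) := by
      intro i; congr 1; funext x; ring
    simp_rw [e]
    ring
  have l : Tendsto (fun n => ((∑ i, ∫ x, (ζ x * ρ x * du x i i) * deriv b (cvk (kern n) ρ x))
        - (∑ i, ∫ x, (ζ x * du x i i) * b (cvk (kern n) ρ x)))
      - ∑ i, ∫ x, (pd ζ i x * u x i) * b (cvk (kern n) ρ x)) atTop
      (𝓝 (((∑ i, ∫ x, (ζ x * ρ x * du x i i) * deriv b (ρ x)) - (∑ i, ∫ x, (ζ x * du x i i) * b (ρ x)))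
      - ∑ i, ∫ x, (pd ζ i x * u x i) * b (ρ x))) :=
    ((tendsto_finsetSum _ fun i _ => dct_b hρl (i1 i) hb' hM').sub
      (tendsto_finsetSum _ fun i _ => dct_b hρl (i2 i) hb.continuous hM)).sub
      (tendsto_finsetSum _ fun i _ => dct_b hρl (i3 i) hb.continuous hM)
  have := tendsto_nhds_unique l (c.congr key)
  linarith
end

end Part9

section Part10
open scoped ENNReal NNReal ContDiff

/-- `|s|^γ`, smooth version of the pressure -/
def Wf (γ s : ℝ) : ℝ := (s ^ 2) ^ (γ / 2)

/-- truncated pressure -/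
def bf (γ δ s : ℝ) : ℝ := Wf γ s / (1 + δ * Wf γ s)

lemma Wf_nonneg (γ s : ℝ) : 0 ≤ Wf γ s := Real.rpow_nonneg (sq_nonneg s) _

lemma Wf_eq (γ : ℝ) {s : ℝ} (hs : 0 ≤ s) : Wf γ s = s ^ γ := by
  unfold Wf
  rw [← Real.rpow_natCast, ← Real.rpow_mul hs]
  congr 1; push_cast; ring

lemma Wf_contDiff {γ : ℝ} (hγ : 2 ≤ γ) : ContDiff ℝ 1 (Wf γ) := by
  unfold Wf
  have h : ContDiff ℝ ((1 : ℕ) : WithTop ℕ∞) (fun x : ℝ => x ^ (γ / 2)) :=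
    Real.contDiff_rpow_const_of_le (by push_cast; linarith)
  have h' : ContDiff ℝ 1 (fun x : ℝ => x ^ (γ / 2)) := by exact_mod_cast h
  exact h'.comp (contDiff_id.pow 2)

lemma Wf_deriv {γ : ℝ} (hγ : 2 ≤ γ) (s : ℝ) :
    HasDerivAt (Wf γ) (γ * s * (s ^ 2) ^ (γ / 2 - 1)) s := by
  have h1 : HasDerivAt (fun x : ℝ => x ^ (γ / 2)) (γ / 2 * (s ^ 2) ^ (γ / 2 - 1)) (s ^ 2) :=
    Real.hasDerivAt_rpow_const (Or.inr (by linarith))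
  have h2 : HasDerivAt (fun x : ℝ => x ^ 2) (2 * s) s := by simpa using hasDerivAt_pow 2 s
  have := HasDerivAt.comp (h₂ := fun x : ℝ => x ^ (γ / 2)) (h := fun x : ℝ => x ^ 2) s h1 h2
  have e : γ / 2 * (s ^ 2) ^ (γ / 2 - 1) * (2 * s) = γ * s * (s ^ 2) ^ (γ / 2 - 1) := by ring
  rw [e] at this
  exact this

lemma bf_den {γ δ : ℝ} (hδ : 0 < δ) (s : ℝ) : 0 < 1 + δ * Wf γ s := by
  have := Wf_nonneg γ s
  positivity

lemma bf_contDiff {γ δ : ℝ} (hγ : 2 ≤ γ) (hδ : 0 < δ) : ContDiff ℝ 1 (bf γ δ) :=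
  (Wf_contDiff hγ).div (contDiff_const.add (contDiff_const.mul (Wf_contDiff hγ)))
    fun s => (bf_den hδ s).ne'

lemma bf_deriv {γ δ : ℝ} (hγ : 2 ≤ γ) (hδ : 0 < δ) (s : ℝ) :
    deriv (bf γ δ) s = (γ * s * (s ^ 2) ^ (γ / 2 - 1)) / (1 + δ * Wf γ s) ^ 2 := by
  have h := (Wf_deriv hγ s).div (((Wf_deriv hγ s).const_mul δ).const_add 1) (bf_den hδ s).ne'
  have h' : HasDerivAt (bf γ δ) _ s := h
  rw [h'.deriv]
  congr 1; ring

lemma s_mul_rpow {γ : ℝ} (hγ : 2 ≤ γ) (s : ℝ) : s ^ 2 * (s ^ 2) ^ (γ / 2 - 1) = Wf γ s := by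
  unfold Wf
  have := Real.rpow_add_one' (sq_nonneg s) (y := γ / 2 - 1) (by linarith)
  rw [sub_add_cancel] at this
  rw [this]; ring

lemma bf_bdd {γ δ : ℝ} (hγ : 2 ≤ γ) (hδ : 0 < δ) (s : ℝ) : |bf γ δ s| ≤ γ / δ := by
  have h0 := Wf_nonneg γ s
  have h1 := bf_den (γ := γ) hδ s
  unfold bf
  rw [abs_of_nonneg (by positivity), div_le_div_iff₀ h1 hδ]
  nlinarith [mul_nonneg hδ.le h0]

lemma bf_deriv_bdd {γ δ : ℝ} (hγ : 2 ≤ γ) (hδ : 0 < δ) (hδ1 : δ ≤ 1) (s : ℝ) :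
    |deriv (bf γ δ) s| ≤ γ / δ := by
  have h0 := Wf_nonneg γ s
  have h1 := bf_den (γ := γ) hδ s
  have hr : 0 ≤ (s ^ 2) ^ (γ / 2 - 1) := Real.rpow_nonneg (sq_nonneg s) _
  have key : |s| * (s ^ 2) ^ (γ / 2 - 1) ≤ 1 + Wf γ s := by
    rcases le_total |s| 1 with h | h
    · have : (s ^ 2) ^ (γ / 2 - 1) ≤ 1 :=
        Real.rpow_le_one (sq_nonneg s) (by rw [← sq_abs]; exact pow_le_one₀ (abs_nonneg s) h) (by linarith)
      nlinarith [abs_nonneg s]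
    · have e := s_mul_rpow hγ s
      have : |s| ≤ s ^ 2 := by rw [← sq_abs]; nlinarith
      have := mul_le_mul_of_nonneg_right this hr
      linarith
  rw [bf_deriv hγ hδ, abs_div, abs_mul, abs_mul, abs_of_nonneg hr, abs_of_nonneg (by linarith : 0 ≤ γ),
    abs_of_nonneg (sq_nonneg (1 + δ * Wf γ s)), div_le_div_iff₀ (by positivity) hδ]
  have a1 : 1 * δ + δ * Wf γ s ≤ (1 + δ * Wf γ s) ^ 2 := by nlinarith [mul_nonneg hδ.le h0]
  have a2 : |s| * (s ^ 2) ^ (γ / 2 - 1) * δ ≤ (1 + δ * Wf γ s) ^ 2 := by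
    have := mul_le_mul_of_nonneg_right key hδ.le
    linarith
  have := mul_le_mul_of_nonneg_left a2 (by linarith : 0 ≤ γ)
  linarith

section
variable {μ η γ : ℝ} {dG : E3 → Fin 3 → ℝ} {ρ : E3 → ℝ} {u : E3 → Fin 3 → ℝ}
    {du : E3 → Fin 3 → Fin 3 → ℝ} {Gn : ℕ → E3 → ℝ} {un : ℕ → E3 → Fin 3 → ℝ}

lemma Dat.Pu_int (D : Dat μ η γ dG ρ u du Gn un) (i : Fin 3) :
    Integrable (fun x => ρ x ^ γ * |u x i|) volume := by
  have h := D.P_mem_two.integrable_mul (D.u3_mem i)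
  refine (D.P_int.add h).mono' (D.P_int.1.mul (D.uL i).2.1.abs.1) (Eventually.of_forall fun x => ?_)
  have hp : 0 ≤ ρ x ^ γ := Real.rpow_nonneg (D.ρ0 x) _
  have ha := abs_nonneg (u x i)
  simp only [Pi.add_apply, Pi.mul_apply]
  rw [Real.norm_of_nonneg (by positivity)]
  have : |u x i| ≤ 1 + |u x i| ^ 3 := by
    rcases le_total |u x i| 1 with h | h
    · have : 0 ≤ |u x i| ^ 3 := by positivity
      linarith
    · nlinarith [mul_nonneg ha ha, mul_nonneg ha (sub_nonneg.2 h), mul_nonneg (mul_nonneg ha ha) (sub_nonneg.2 h)]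
  nlinarith

lemma Dat.Pdiv (D : Dat μ η γ dG ρ u du Gn un) : ∑ i, ∫ x, ρ x ^ γ * du x i i = 0 := by
  have hγ2 : 2 ≤ γ := by linarith [D.hγ1]
  set δ : ℕ → ℝ := fun n => 1 / ((n : ℝ) + 1) with hδ
  have δ0 : ∀ n, 0 < δ n := fun n => by positivity
  have δ1 : ∀ n, δ n ≤ 1 := fun n => by
    rw [hδ]; simp only; rw [div_le_one (by positivity)]; have : (0:ℝ) ≤ n := by positivity
    linarith
  have δt : Tendsto δ atTop (𝓝 0) := tendsto_one_div_add_atTop_nhds_zero_nat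
  have hρ := D.ρ6
  have := ht362
  have := ht65
  set w : E3 → ℝ := fun x => ρ x ^ γ with hw
  have hw0 : ∀ x, 0 ≤ w x := fun x => Real.rpow_nonneg (D.ρ0 x) _
  have hWw : ∀ x, Wf γ (ρ x) = w x := fun x => Wf_eq γ (D.ρ0 x)
  have iw : ∀ i, Integrable (fun x => w x * du x i i) volume := fun i =>
    D.P_mem_two.integrable_mul (D.duL i i).2.1
  -- the integrand on the left
  set L : ℕ → Fin 3 → E3 → ℝ := fun n i x =>
    zt n x * (γ * w x / (1 + δ n * w x) ^ 2 - w x / (1 + δ n * w x)) * du x i i with hL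
  have ren : ∀ n, ∑ i, ∫ x, L n i x = ∑ i, ∫ x, (pd (zt n) i x * u x i) * bf γ (δ n) (ρ x) := by
    intro n
    have hb := bf_contDiff hγ2 (δ0 n)
    have hb' : Continuous (deriv (bf γ (δ n))) := hb.continuous_deriv (by norm_num)
    rw [← D.renorm hb (bf_bdd hγ2 (δ0 n)) (bf_deriv_bdd hγ2 (δ0 n) (δ1 n)) (zt_test n),
      ← Finset.sum_sub_distrib]
    refine Finset.sum_congr rfl fun i _ => ?_
    have i1 : Integrable (fun x => zt n x * ρ x * du x i i * deriv (bf γ (δ n)) (ρ x)) volume :=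
      ((show MemLp (fun x => zt n x * ρ x) 2 volume from
        hρ.mul ((zt_test n).memLp 3)).integrable_mul (D.duL i i).2.1).mul_bdd
        (hb'.comp_aestronglyMeasurable hρ.1) (Eventually.of_forall fun x =>
          bf_deriv_bdd hγ2 (δ0 n) (δ1 n) _)
    have i2 : Integrable (fun x => zt n x * du x i i * bf γ (δ n) (ρ x)) volume :=
      (((zt_test n).memLp 2).integrable_mul (D.duL i i).2.1).mul_bdd
        (hb.continuous.comp_aestronglyMeasurable hρ.1) (Eventually.of_forall fun x =>
          bf_bdd hγ2 (δ0 n) _)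
    rw [← integral_sub i1 i2]
    congr 1; funext x
    rw [bf_deriv hγ2 (δ0 n), bf, hWw, hL]
    have e := s_mul_rpow hγ2 (ρ x)
    rw [hWw] at e
    have e2 : ρ x * (γ * ρ x * (ρ x ^ 2) ^ (γ / 2 - 1) / (1 + δ n * w x) ^ 2) =
      γ * w x / (1 + δ n * w x) ^ 2 := by
      rw [← e]; ring
    simp only
    rw [← e2]; ring
  have left : ∀ i, Tendsto (fun n => ∫ x, L n i x) atTop (𝓝 (∫ x, (γ - 1) * (w x * du x i i))) := by
    intro i
    refine tendsto_integral_of_dominated_convergence (fun x => (γ + 1) * |w x * du x i i|) ?_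
      ((iw i).abs.const_mul _) ?_ ?_
    · intro n
      have hwm : AEMeasurable w volume := D.P_int.1.aemeasurable
      have hd : AEMeasurable (fun x => du x i i) volume := (D.duL i i).2.1.1.aemeasurable
      have hz : AEMeasurable (zt n) volume := (zt_test n).1.continuous.aemeasurable
      refine AEMeasurable.aestronglyMeasurable ?_
      exact (hz.mul (((hwm.const_mul γ).div (((hwm.const_mul _).const_add 1).pow_const 2)).sub
        (hwm.div ((hwm.const_mul _).const_add 1)))).mul hd
    · intro n
      refine Eventually.of_forall fun x => ?_
      rw [hL]; simp only
      rw [Real.norm_eq_abs, abs_mul, abs_mul, abs_mul (w x), ← mul_assoc]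
      refine mul_le_mul_of_nonneg_right ?_ (abs_nonneg _)
      rw [abs_of_nonneg (zt_nonneg n x), abs_of_nonneg (hw0 x)]
      have h1 : 1 ≤ 1 + δ n * w x := by nlinarith [mul_nonneg (δ0 n).le (hw0 x)]
      have a1 : w x / (1 + δ n * w x) ≤ w x := div_le_self (hw0 x) h1
      have a2 : γ * w x / (1 + δ n * w x) ^ 2 ≤ γ * w x :=
        div_le_self (mul_nonneg (by linarith) (hw0 x)) (one_le_pow₀ h1)
      have a3 : 0 ≤ w x / (1 + δ n * w x) := div_nonneg (hw0 x) (by linarith)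
      have a4 : 0 ≤ γ * w x / (1 + δ n * w x) ^ 2 :=
        div_nonneg (mul_nonneg (by linarith) (hw0 x)) (by positivity)
      have a5 : |γ * w x / (1 + δ n * w x) ^ 2 - w x / (1 + δ n * w x)| ≤ (γ + 1) * w x := by
        rw [abs_le]; constructor <;> linarith
      calc _ ≤ 1 * ((γ + 1) * w x) := mul_le_mul (zt_le_one n x) a5 (abs_nonneg _) (by norm_num)
        _ = _ := one_mul _
    · refine Eventually.of_forall fun x => ?_
      have d1 : Tendsto (fun n => 1 + δ n * w x) atTop (𝓝 (1 + 0 * w x)) :=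
        tendsto_const_nhds.add (δt.mul_const _)
      have hz : Tendsto (fun n => zt n x) atTop (𝓝 1) :=
        tendsto_const_nhds.congr' ((zt_tendsto x).mono fun n hn => hn.symm)
      have hne : (1 + 0 * w x) ≠ 0 := by simp
      have := (hz.mul (((tendsto_const_nhds (x := γ * w x)).div (d1.pow 2) (pow_ne_zero 2 hne)).sub
        ((tendsto_const_nhds (x := w x)).div d1 hne))).mul_const (du x i i)
      have e : 1 * (γ * w x / (1 + 0 * w x) ^ 2 - w x / (1 + 0 * w x)) * du x i i =
          (γ - 1) * (w x * du x i i) := by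
        rw [zero_mul, add_zero, one_pow, div_one, div_one]; ring
      rw [e] at this
      exact this
  have right : ∀ i, Tendsto (fun n => ∫ x, (pd (zt n) i x * u x i) * bf γ (δ n) (ρ x)) atTop (𝓝 0) := by
    intro i
    obtain ⟨C, hC0, hC⟩ := zt_pd_bdd
    have hlim := (div_nat_tendsto C).mul_const (∫ x, w x * |u x i|)
    rw [zero_mul] at hlim
    refine squeeze_zero_norm (fun n => ?_) hlim
    rw [← integral_const_mul]
    refine norm_integral_le_of_norm_le ((D.Pu_int i).const_mul _) (Eventually.of_forall fun x => ?_)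
    rw [Real.norm_eq_abs, abs_mul, abs_mul]
    have h1 : 1 ≤ 1 + δ n * w x := by nlinarith [mul_nonneg (δ0 n).le (hw0 x)]
    have b1 : |bf γ (δ n) (ρ x)| ≤ w x := by
      rw [bf, hWw, abs_of_nonneg (div_nonneg (hw0 x) (by linarith))]
      exact div_le_self (hw0 x) h1
    calc |pd (zt n) i x| * |u x i| * |bf γ (δ n) (ρ x)|
        ≤ C / ((n : ℝ) + 1) * |u x i| * w x := by
          refine mul_le_mul (mul_le_mul_of_nonneg_right (hC n i x) (abs_nonneg _)) b1 (abs_nonneg _) ?_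
          positivity
      _ = _ := by ring
  have l1 := tendsto_finsetSum Finset.univ fun i _ => left i
  have l2 := tendsto_finsetSum Finset.univ fun i _ => right i
  have fin := tendsto_nhds_unique l1 (l2.congr fun n => (ren n).symm)
  simp_rw [integral_const_mul, ← Finset.mul_sum] at fin
  simp only [Finset.sum_const_zero, mul_eq_zero] at fin
  rcases fin with h | h
  · linarith
  · exact h
end

end Part10

section Part11
open scoped ENNReal NNReal ContDiff

lemma LpT.sum3 {p : ℝ≥0∞} [Fact (1 ≤ p)] {fn : Fin 3 → ℕ → E3 → ℝ} {f : Fin 3 → E3 → ℝ}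
    (h : ∀ i, LpT p (fn i) (f i)) : LpT p (fun n x => ∑ i, fn i n x) (fun x => ∑ i, f i x) := by
  simp only [Fin.sum_univ_three]
  exact ((h 0).add (h 1)).add (h 2)

lemma cross_ibp {w : Fin 3 → E3 → ℝ} (hw : ∀ i, IsTest univ (w i)) (i j : Fin 3) :
    ∫ x, pd (w i) j x * pd (w j) i x = ∫ x, pd (w i) i x * pd (w j) j x := by
  have h1 := ibp ((hw i).pd j).one ((hw i).pd j).2.1 (hw j).one i
  have h2 := ibp ((hw i).pd i).one ((hw i).pd i).2.1 (hw j).one j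
  rw [pd_comm (hw i).two j i] at h1
  rw [h1, h2]

lemma ell {μ η : ℝ} (hμ : 0 < μ) (hη : 0 ≤ η) {w : Fin 3 → E3 → ℝ} (hw : ∀ i, IsTest univ (w i)) :
    μ * ∑ i, ∑ j, nrm 2 (pd (w i) j) ^ 2 ≤
      ∫ x, ∑ i, ∑ j, Smat μ η (fun i j => pd (w i) j x) i j * pd (w i) j x := by
  have ip : ∀ i j k l, Integrable (fun x => pd (w i) j x * pd (w k) l x) volume := fun i j k l =>
    (((hw i).pd j).memLp 2).integrable_mul (((hw k).pd l).memLp 2)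
  have isq : ∀ i j, Integrable (fun x => pd (w i) j x ^ 2) volume := fun i j => by
    simpa [sq] using ip i j i j
  have e : ∀ x, ∑ i, ∑ j, Smat μ η (fun i j => pd (w i) j x) i j * pd (w i) j x =
      (μ * ∑ i, ∑ j, pd (w i) j x ^ 2) + (μ * ∑ i, ∑ j, pd (w i) j x * pd (w j) i x) +
        (η - 2 / 3 * μ) * ∑ i, ∑ j, pd (w i) i x * pd (w j) j x := by
    intro x
    simp [Smat, Fin.sum_univ_three]
    ring
  simp_rw [e]
  have i1 : Integrable (fun x => μ * ∑ i, ∑ j, pd (w i) j x ^ 2) volume :=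
    (integrable_finsetSum _ fun i _ => integrable_finsetSum _ fun j _ => isq i j).const_mul _
  have i2 : Integrable (fun x => μ * ∑ i, ∑ j, pd (w i) j x * pd (w j) i x) volume :=
    (integrable_finsetSum _ fun i _ => integrable_finsetSum _ fun j _ => ip i j j i).const_mul _
  have i3 : Integrable (fun x => ∑ i, ∑ j, pd (w i) i x * pd (w j) j x) volume :=
    (integrable_finsetSum _ fun i _ => integrable_finsetSum _ fun j _ => ip i i j j)
  have i12 : Integrable (fun x => (μ * ∑ i, ∑ j, pd (w i) j x ^ 2) +
      (μ * ∑ i, ∑ j, pd (w i) j x * pd (w j) i x)) volume := i1.add i2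
  rw [integral_add i12 (i3.const_mul _), integral_add i1 i2, integral_const_mul, integral_const_mul,
    integral_const_mul]
  have s1 : ∫ x, ∑ i, ∑ j, pd (w i) j x ^ 2 = ∑ i, ∑ j, nrm 2 (pd (w i) j) ^ 2 := by
    rw [integral_finsetSum _ fun i _ => integrable_finsetSum _ fun j _ => isq i j]
    refine Finset.sum_congr rfl fun i _ => ?_
    rw [integral_finsetSum _ fun j _ => isq i j]
    exact Finset.sum_congr rfl fun j _ => (nrm_two_sq (((hw i).pd j).memLp 2)).symm
  have s2 : ∫ x, ∑ i, ∑ j, pd (w i) j x * pd (w j) i x = ∫ x, ∑ i, ∑ j, pd (w i) i x * pd (w j) j x := by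
    rw [integral_finsetSum _ fun i _ => integrable_finsetSum _ fun j _ => ip i j j i,
      integral_finsetSum _ fun i _ => integrable_finsetSum _ fun j _ => ip i i j j]
    refine Finset.sum_congr rfl fun i _ => ?_
    rw [integral_finsetSum _ fun j _ => ip i j j i, integral_finsetSum _ fun j _ => ip i i j j]
    exact Finset.sum_congr rfl fun j _ => cross_ibp hw i j
  have s3 : 0 ≤ ∫ x, ∑ i, ∑ j, pd (w i) i x * pd (w j) j x := by
    refine integral_nonneg fun x => ?_
    have : ∑ i, ∑ j, pd (w i) i x * pd (w j) j x = (∑ i, pd (w i) i x) ^ 2 := by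
      simp only [Fin.sum_univ_three]; ring
    simp only [this]
    positivity
  rw [s1, s2]
  nlinarith [mul_nonneg (by linarith : 0 ≤ μ / 3 + η) s3]

section
variable {μ η γ : ℝ} {dG : E3 → Fin 3 → ℝ} {ρ : E3 → ℝ} {u : E3 → Fin 3 → ℝ}
    {du : E3 → Fin 3 → Fin 3 → ℝ} {Gn : ℕ → E3 → ℝ} {un : ℕ → E3 → Fin 3 → ℝ}

lemma Dat.conv_zero (D : Dat μ η γ dG ρ u du Gn un) (i : Fin 3) :
    ∫ x, ∑ j, ((ρ x * u x j) * u x i) * du x i j = 0 := by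
  have : Fact ((1 : ℝ≥0∞) ≤ 3) := ⟨by norm_num⟩
  have : ENNReal.HolderTriple 3 6 2 := ht362
  have t : LpT 1 _ _ := LpT.sum3 (p := 1) fun j =>
    (((LpT.const (D.ρu3 j)).mul (D.uL i) : LpT 2 _ _).mul (D.duL i j) : LpT 1 _ _)
  refine tendsto_nhds_unique t.integral (tendsto_const_nhds.congr fun n => ?_)
  have hT := D.unT n i
  have hsq : IsTest univ (fun x => un n x i * un n x i) := by
    rw [isTest_iff] at *
    exact ⟨hT.1.mul hT.1, hT.2.mul_right⟩
  have hm := D.mass _ hsq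
  have e : ∀ x, ρ x * ∑ j, u x j * pd (fun x => un n x i * un n x i) j x =
      2 * ∑ j, ρ x * u x j * un n x i * pd (fun y => un n y i) j x := by
    intro x
    rw [Finset.mul_sum, Finset.mul_sum]
    refine Finset.sum_congr rfl fun j _ => ?_
    have hd : Differentiable ℝ (fun y => un n y i) := hT.differentiable
    rw [pd_mul hd hd]; ring
  simp_rw [e] at hm
  rw [integral_const_mul] at hm
  have : ∫ x, ∑ j, ρ x * u x j * un n x i * pd (fun y => un n y i) j x = 0 := by linarith
  exact this.symm

lemma rexp_fact {γ : ℝ} (h : 3 ≤ γ) : Fact ((1 : ℝ≥0∞) ≤ rexp γ) := ⟨by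
  unfold rexp
  rw [← ENNReal.ofReal_one]
  refine ENNReal.ofReal_le_ofReal ?_
  rw [le_div_iff₀ (by linarith)]; linarith⟩

lemma Dat.force_zero (D : Dat μ η γ dG ρ u du Gn un) :
    ∫ x, ∑ i, (ρ x * u x i) * dG x i = 0 := by
  have := rexp_fact D.hγ1
  have := ht1 D.hγ1
  have := ht2 D.hγ1
  have t : LpT 1 _ _ := LpT.sum3 (p := 1) fun i =>
    ((LpT.const (p := rexp γ) ((D.uL i).2.1.mul D.ρL)).mul (D.dGL i) : LpT 1 _ _)
  refine tendsto_nhds_unique t.integral (tendsto_const_nhds.congr fun n => ?_)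
  rw [← D.mass _ (D.GT n)]
  congr 1; funext x
  simp only [Pi.mul_apply]
  rw [Finset.mul_sum]
  exact Finset.sum_congr rfl fun j _ => by ring

lemma Dat.SLp (D : Dat μ η γ dG ρ u du Gn un) (i j : Fin 3) :
    LpT 2 (fun n x => Smat μ η (fun i j => pd (fun y => un n y i) j x) i j)
      (fun x => Smat μ η (du x) i j) := by
  set c : ℝ := if i = j then (1 : ℝ) else 0 with hc
  have t := ((((D.duL i j).add (D.duL j i)).const_mul μ).add
    ((LpT.sum3 fun k => D.duL k k).const_mul ((η - 2 / 3 * μ) * c)))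
  convert t using 1
  · funext n x; simp only [Smat]; rw [← hc]; ring
  · funext x; simp only [Smat]; rw [← hc]; ring

lemma Dat.main (D : Dat μ η γ dG ρ u du Gn un) (i : Fin 3) : ∀ᵐ x, u x i = 0 := by
  have f3 : Fact ((1 : ℝ≥0∞) ≤ 3) := ⟨by norm_num⟩
  have f6 : Fact ((1 : ℝ≥0∞) ≤ 6) := ⟨by norm_num⟩
  have : ENNReal.HolderTriple 3 6 2 := ht362
  have := rexp_fact D.hγ1
  have := ht1 D.hγ1
  have := ht2 D.hγ1
  have fγ : Fact ((1 : ℝ≥0∞) ≤ ENNReal.ofReal γ) := ⟨by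
    rw [← ENNReal.ofReal_one]; exact ENNReal.ofReal_le_ofReal (by linarith [D.hγ1])⟩
  have hρu2 : ∀ i j, MemLp (fun x => (ρ x * u x i) * u x j) 2 volume := fun i j =>
    (D.uL j).2.1.mul (D.ρu3 i)
  -- limits of the four terms
  have tc : LpT 1 _ _ := LpT.sum3 (p := 1) fun i => LpT.sum3 (p := 1) fun j =>
    ((LpT.const (hρu2 i j)).mul (D.duL i j) : LpT 1 _ _)
  have tp : LpT 1 _ _ := LpT.sum3 (p := 1) fun i =>
    ((LpT.const D.P_mem_two).mul (D.duL i i) : LpT 1 _ _)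
  have tl := (tc.add tp).integral
  have ts : LpT 1 _ _ := LpT.sum3 (p := 1) fun i => LpT.sum3 (p := 1) fun j =>
    ((LpT.const (D.SLp i j).2.1).mul (D.duL i j) : LpT 1 _ _)
  have tf : LpT 1 _ _ := LpT.sum3 (p := 1) fun i =>
    (((LpT.const D.ρL).mul (D.uL i) : LpT (rexp γ) _ _).mul (LpT.const (D.dGL i).2.1) : LpT 1 _ _)
  have tr := ts.integral.sub tf.integral
  have z1 : ∫ x, ((∑ i, ∑ j, (ρ x * u x i * u x j) * du x i j) + ∑ i, ρ x ^ γ * du x i i) = 0 := by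
    have a1 : ∀ i, Integrable (fun x => ∑ j, (ρ x * u x i * u x j) * du x i j) volume := fun i =>
      integrable_finsetSum _ fun j _ => (hρu2 i j).integrable_mul (D.duL i j).2.1
    have a2 : ∀ i, Integrable (fun x => ρ x ^ γ * du x i i) volume := fun i =>
      D.P_mem_two.integrable_mul (D.duL i i).2.1
    rw [integral_add (integrable_finsetSum _ fun i _ => a1 i) (integrable_finsetSum _ fun i _ => a2 i),
      integral_finsetSum _ fun i _ => a1 i, integral_finsetSum _ fun i _ => a2 i, D.Pdiv, add_zero]
    refine Finset.sum_eq_zero fun i _ => ?_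
    rw [← D.conv_zero i]
    congr 1; funext x
    exact Finset.sum_congr rfl fun j _ => by ring
  have z2 : ∫ x, ∑ i, (ρ x * u x i) * dG x i = 0 := D.force_zero
  have z3 : ∫ x, ∑ i, ∑ j, Smat μ η (du x) i j * du x i j = 0 := by
    have h := tendsto_nhds_unique tl (tr.congr fun n => ?_)
    · rw [z2, sub_zero] at h
      rw [← h]; exact z1
    · have hm := D.mom (fun i x => un n x i) (D.unT n)
      have e1 : ∀ x, (∑ i, ∑ j, ρ x * u x i * u x j * pd (fun y => un n y i) j x) +
          ρ x ^ γ * ∑ i, pd (fun y => un n y i) i x =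
          (∑ i, ∑ j, ρ x * u x i * u x j * pd (fun y => un n y i) j x) +
          ∑ i, ρ x ^ γ * pd (fun y => un n y i) i x := by
        intro x; rw [Finset.mul_sum]
      have e2 : ∀ x, ∑ i, ρ x * dG x i * un n x i = ∑ i, ρ x * un n x i * dG x i := by
        intro x; exact Finset.sum_congr rfl fun i _ => by ring
      simp_rw [e2] at hm
      have hm' := hm.symm
      refine hm'.trans ?_
      congr 1; funext x
      exact e1 x
  -- coercivity
  have tq : LpT 1 _ _ := LpT.sum3 (p := 1) fun i => LpT.sum3 (p := 1) fun j =>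
    ((D.SLp i j).mul (D.duL i j) : LpT 1 _ _)
  have tq' := tq.integral
  rw [z3] at tq'
  have hE : ∀ n, μ * ∑ i, ∑ j, nrm 2 (pd (fun y => un n y i) j) ^ 2 ≤ _ := fun n =>
    ell D.hμ D.hη (D.unT n)
  have hsq : ∀ i j, Tendsto (fun n => nrm 2 (pd (fun y => un n y i) j) ^ 2) atTop (𝓝 0) := by
    intro i j
    have lim := tq'.const_mul μ⁻¹
    rw [mul_zero] at lim
    refine squeeze_zero (fun n => sq_nonneg _) (fun n => ?_) lim
    have h1 := hE n
    have h2 : nrm 2 (pd (fun y => un n y i) j) ^ 2 ≤ ∑ i, ∑ j, nrm 2 (pd (fun y => un n y i) j) ^ 2 :=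
      (Finset.single_le_sum (f := fun j => nrm 2 (pd (fun y => un n y i) j) ^ 2)
        (fun j _ => sq_nonneg _) (Finset.mem_univ j)).trans
      (Finset.single_le_sum (f := fun i => ∑ j, nrm 2 (pd (fun y => un n y i) j) ^ 2)
        (fun i _ => Finset.sum_nonneg fun j _ => sq_nonneg _) (Finset.mem_univ i))
    rw [le_inv_mul_iff₀ D.hμ]
    exact (mul_le_mul_of_nonneg_left h2 D.hμ.le).trans h1
  have hn : ∀ j, Tendsto (fun n => nrm 2 (pd (fun y => un n y i) j)) atTop (𝓝 0) := by
    intro j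
    have := (hsq i j).sqrt
    rw [Real.sqrt_zero] at this
    exact this.congr fun n => Real.sqrt_sq (nrm_nonneg _ _)
  obtain ⟨C, hC0, hC⟩ := sobolev
  have h6 : Tendsto (fun n => nrm 6 (fun x => un n x i)) atTop (𝓝 0) := by
    have lim := (tendsto_finsetSum Finset.univ fun j _ => hn j).const_mul C
    simp only [Finset.sum_const_zero, mul_zero] at lim
    exact squeeze_zero (fun n => nrm_nonneg _ _) (fun n => hC _ (D.unT n i)) lim
  have h7 := tendsto_nhds_unique (D.uL i).bdd h6
  unfold nrm at h7
  rw [ENNReal.toReal_eq_zero_iff] at h7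
  rcases h7 with h7 | h7
  · rw [eLpNorm_eq_zero_iff (D.uL i).2.1.1 (by norm_num)] at h7
    filter_upwards [h7] with x hx
    exact hx
  · exact absurd h7 (D.uL i).2.1.2.ne
end

end Part11

section Part12
open scoped ENNReal NNReal ContDiff

lemma LpT.of_tendsto {p : ℝ≥0∞} {fn : ℕ → E3 → ℝ} {f : E3 → ℝ}
    (h1 : ∀ n, MemLp (fn n) p volume) (hf : AEStronglyMeasurable f volume)
    (F : ℕ → ℝ≥0∞) (hF : Tendsto F atTop (𝓝 0))
    (hle : ∀ n, eLpNorm (fun x => fn n x - f x) p volume ≤ F n) : LpT p fn f := by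
  have ht : Tendsto (fun n => eLpNorm (fun x => fn n x - f x) p volume) atTop (𝓝 0) :=
    tendsto_of_tendsto_of_tendsto_of_le_of_le tendsto_const_nhds hF (fun _ => zero_le) hle
  refine ⟨h1, ?_, ht⟩
  obtain ⟨n, hn⟩ := (ht.eventually (gt_mem_nhds ENNReal.zero_lt_top)).exists
  have hd : MemLp (fun x => fn n x - f x) p volume := ⟨(h1 n).1.sub hf, hn⟩
  have := (h1 n).sub hd
  refine this.congr_norm hf (Eventually.of_forall fun x => ?_)
  simp

lemma IsTestVec.comp_test {φ : E3 → Fin 3 → ℝ}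
    (h : IsTestVec ((⊤ : ℕ∞) : WithTop ℕ∞) univ φ) (i : Fin 3) :
    IsTest univ (fun x => φ x i) := by
  refine ⟨(contDiff_pi.1 h.1) i, ?_, subset_univ _⟩
  exact h.2.1.comp_left (g := fun v : Fin 3 → ℝ => v i) rfl

lemma isTestVec_of_comp {φ : Fin 3 → E3 → ℝ} (h : ∀ i, IsTest univ (φ i)) :
    IsTestVec 1 univ (fun x i => φ i x) := by
  refine ⟨contDiff_pi.2 fun i => (h i).1.of_le (by exact_mod_cast le_top), ?_, subset_univ _⟩
  refine HasCompactSupport.of_support_subset_isCompact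
    (K := ⋃ i, tsupport (φ i)) (isCompact_iUnion fun i => (h i).2.1) ?_
  intro x hx
  by_contra hc
  apply hx
  funext i
  simp only [mem_iUnion, not_exists] at hc
  exact image_eq_zero_of_notMem_tsupport (hc i)

lemma dat_exists
    (μ η γ : ℝ) (hμ : 0 < μ) (hη : 0 ≤ η) (hγ1 : 3 ≤ γ) (hγ2 : γ < 6)
    (G : E3 → ℝ) (dG : E3 → Fin 3 → ℝ)
    (ρ : E3 → ℝ) (u : E3 → Fin 3 → ℝ) (du : E3 → Fin 3 → Fin 3 → ℝ)
    (hG : MemD01q univ G dG (6 * γ / (5 * γ - 6)))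
    (hsol : IsentropicWeakSolution μ η γ G dG ρ u du)
    (hργ : MemLp ρ (ENNReal.ofReal γ) volume) :
    ∃ Gn un, Dat μ η γ dG (fun x => max (ρ x) 0) u du Gn un := by
  obtain ⟨-, hdG, Gn, hGn, hGt, -⟩ := hG
  have hs : WeakSolution univ μ η (fun s => s ^ γ) G dG ρ u du := hsol
  obtain ⟨-, -, hdu, un, hun, hut, hu6⟩ := hs.u_D012
  have hae := hs.ρ_nonneg
  have hmass := hs.mass
  have hmom := hs.momentum
  simp only [Measure.restrict_univ] at hdG hGt hdu hut hu6 hae hmass hmom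
  have hρ : ρ =ᵐ[volume] fun x => max (ρ x) 0 := by
    filter_upwards [hae] with x hx
    exact (max_eq_left hx).symm
  have hum := hs.aemeas_u
  refine ⟨Gn, un, ⟨hμ, hη, hγ1, hγ2, fun x => le_max_right _ _, (memLp_congr_ae hρ).1 hργ, ?_,
    fun n i => (hun n).comp_test i, ?_, ?_, hGn, ?_, ?_⟩⟩
  · intro φ hφ
    refine Eq.trans (integral_congr_ae ?_) (hmass φ hφ.1 hφ.2.1)
    filter_upwards [hρ] with x hx
    rw [← hx]
  · intro i
    refine LpT.of_tendsto (fun n => ((hun n).comp_test i).memLp 6)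
      ((aemeasurable_pi_iff.1 hum i).aestronglyMeasurable) _ hu6 fun n => ?_
    exact eLpNorm_mono fun x => norm_le_pi_norm (un n x - u x) i
  · intro i j
    refine LpT.of_tendsto (fun n => (((hun n).comp_test i).pd j).memLp 2)
      ((aemeasurable_pi_iff.1 (aemeasurable_pi_iff.1 hdu.1.aemeasurable i)
        j).aestronglyMeasurable) _ hut fun n => ?_
    exact eLpNorm_mono fun x => (norm_le_pi_norm ((tgrad (un n) x - du x) i) j).trans
      (norm_le_pi_norm (tgrad (un n) x - du x) i)
  · intro i
    refine LpT.of_tendsto (fun n => ((hGn n).pd i).memLp _)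
      ((aemeasurable_pi_iff.1 hdG.1.aemeasurable i).aestronglyMeasurable) _ hGt fun n => ?_
    exact eLpNorm_mono fun x => norm_le_pi_norm ((fun i => pd (Gn n) i x) - dG x) i
  · intro φ hφ
    have h := hmom (fun x i => φ i x) (isTestVec_of_comp hφ)
    have e1 : ∫ x, ((∑ i, ∑ j, ρ x * u x i * u x j * pd (φ i) j x)
        + ρ x ^ γ * (∑ i, pd (φ i) i x)) =
        ∫ x, ((∑ i, ∑ j, max (ρ x) 0 * u x i * u x j * pd (φ i) j x)
        + max (ρ x) 0 ^ γ * (∑ i, pd (φ i) i x)) := by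
      refine integral_congr_ae ?_
      filter_upwards [hρ] with x hx
      rw [← hx]
    have e2 : ∫ x, ∑ i, ρ x * dG x i * φ i x = ∫ x, ∑ i, max (ρ x) 0 * dG x i * φ i x := by
      refine integral_congr_ae ?_
      filter_upwards [hρ] with x hx
      rw [← hx]
    rw [← e1, ← e2]
    exact h

end Part12

/-- **Theorem 7.** Let `(ρ, u)` be a weak solution of the stationary isentropic system on `ℝ³`
with `3 ≤ γ < 6` and `G ∈ D₀^{1, 6γ/(5γ−6)}(ℝ³)`. If `ρ ∈ L^γ(ℝ³)`, then `u = 0` a.e. -/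
theorem liouville_isentropic_Lgamma
    (μ η γ : ℝ) (hμ : 0 < μ) (hη : 0 ≤ η) (hγ1 : 3 ≤ γ) (hγ2 : γ < 6)
    (G : E3 → ℝ) (dG : E3 → Fin 3 → ℝ)
    (ρ : E3 → ℝ) (u : E3 → Fin 3 → ℝ) (du : E3 → Fin 3 → Fin 3 → ℝ)
    (hG : MemD01q univ G dG (6 * γ / (5 * γ - 6)))
    (hsol : IsentropicWeakSolution μ η γ G dG ρ u du)
    (hργ : MemLp ρ (ENNReal.ofReal γ) volume) :
    ∀ᵐ x, u x = 0 := by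
  obtain ⟨Gn, un, D⟩ := dat_exists μ η γ hμ hη hγ1 hγ2 G dG ρ u du hG hsol hργ
  filter_upwards [ae_all_iff.2 fun i => D.main i] with x hx
  funext i
  exact hx i
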